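/- arXiv:2311.10183 — 4 statements merged into one kernel-verified Lean document; each statement's English description precedes it below -/
import Mathlib

section
/- Let S be a signature, A and B two S-forest-like alphabets, and A ⊕ B their disjoint sum. For any reduced S-forest f = (t_1,…,t_k), any w' ∈ A*, and any w'' ∈ B*, the number of words w over the disjoint union A ⊔ B such that the subword of w consisting of letters of A is w', the subword consisting of letters of B is w'', and w ⊩^{A⊕B} f, equals the number of tuples ((s_1,ū_1),…,(s_k,ū_k)) with each s_m an S-term, each ū_m a tuple of ar(s_m) S-terms, t_m = s_m⟨ū_m⟩ for all m, such that w' ⊩^A rd(s_1 … s_k) and w'' ⊩^B rd(u_1 … u_k), where u_1 … u_k is the concatenation of the tuples ū_m. (This is the alphabet doubling property θ_{A,B} ∘ r_{A⊕B} = (r_A ⊗ r_B) ∘ Δ.) -/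
open scoped BigOperators

/-- An `S`-term over a signature given by a type `S` of generators with arity map `ar`. -/
inductive STerm (S : Type) (ar : S → ℕ) : Type
  | leaf : STerm S ar
  | node (g : S) (c : Fin (ar g) → STerm S ar) : STerm S ar

namespace STerm

variable {S : Type} {ar : S → ℕ}

/-- The arity of a term: its number of leaves. -/
def arity : STerm S ar → ℕ
  | leaf => 1
  | node _ c => ∑ i, (c i).arity

/-- The degree of a term: its number of internal nodes. -/
def degree : STerm S ar → ℕ
  | leaf => 0
  | node _ c => 1 + ∑ i, (c i).degree

/-- The word of decorations of internal nodes along left-to-right preorder traversal. -/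
def decs : STerm S ar → List S
  | leaf => []
  | node g c => g :: (List.ofFn fun i => (c i).decs).flatten

/-- Grafting `t⟨l⟩`: the `i`-th leaf (left-to-right) is replaced by the `i`-th entry of `l`. -/
def graftList : STerm S ar → List (STerm S ar) → STerm S ar
  | leaf, l => l.headD leaf
  | node g c, l =>
      node g fun i =>
        (c i).graftList
          ((l.drop (∑ j : Fin (ar g), if (j : ℕ) < (i : ℕ) then (c j).arity else 0)).take
            (c i).arity)

/-- Grafting a term at the rightmost leaf. -/
def graftRight : STerm S ar → STerm S ar → STerm S ar
  | leaf, s => s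
  | node g c, s => node g fun i => if (i : ℕ) = ar g - 1 then (c i).graftRight s else c i

/-- Grafting a term at the leftmost (first) leaf, i.e. `∘₁`. -/
def graftFirst : STerm S ar → STerm S ar → STerm S ar
  | leaf, s => s
  | node g c, s => node g fun i => if (i : ℕ) = 0 then (c i).graftFirst s else c i

/-- Preorder traversal word: `none` for leaves, `some g` for an internal node decorated by `g`. -/
def preo : STerm S ar → List (Option S)
  | leaf => [none]
  | node g c => some g :: (List.ofFn fun i => (c i).preo).flatten

/-- The number of extremal leaves of a term: leaves which come after every internal
node in the preorder traversal. -/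
def extremalCount (t : STerm S ar) : ℕ :=
  (t.preo.reverse.takeWhile fun o => o.isNone).length

/-- The list of edges `(i, j, i')` (`i'` is the `j`-th child of `i`, `j` being 1-based) between
internal nodes, internal nodes being numbered from `0` in preorder. -/
def edges : STerm S ar → List (ℕ × ℕ × ℕ)
  | leaf => []
  | node g c =>
      (List.ofFn fun i : Fin (ar g) =>
        (match c i with
          | leaf => ([] : List (ℕ × ℕ × ℕ))
          | node _ _ =>
            [(0, (i : ℕ) + 1,
               1 + ∑ j : Fin (ar g), if (j : ℕ) < (i : ℕ) then (c j).degree else 0)]) ++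
          (c i).edges.map fun e =>
            (e.1 + (1 + ∑ j : Fin (ar g), if (j : ℕ) < (i : ℕ) then (c j).degree else 0), e.2.1,
              e.2.2 + (1 + ∑ j : Fin (ar g), if (j : ℕ) < (i : ℕ) then (c j).degree else 0))).flatten

/-- The easterly wind move inside a term: a subterm rooted at an internal node which has an
immediate left sibling is detached (replaced by a leaf) and grafted onto the rightmost leaf of
the subtree rooted at this left sibling. -/
inductive TermMove : STerm S ar → STerm S ar → Prop
  | here (g : S) (c : Fin (ar g) → STerm S ar) (j j' : Fin (ar g))
      (hj : (j' : ℕ) = (j : ℕ) + 1) (hne : c j' ≠ leaf) :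
      TermMove (node g c)
        (node g (Function.update (Function.update c j ((c j).graftRight (c j'))) j' leaf))
  | child (g : S) (c : Fin (ar g) → STerm S ar) (i : Fin (ar g)) (t' : STerm S ar) :
      TermMove (c i) t' → TermMove (node g c) (node g (Function.update c i t'))

end STerm
section Forest

variable {S : Type} {ar : S → ℕ}

/-- A forest is reduced when none of its trees is a leaf. -/
def IsReducedF (f : List (STerm S ar)) : Prop := ∀ t ∈ f, t ≠ STerm.leaf

/-- The easterly wind move on forests: either the root of a tree having an immediate left
sibling tree is detached and grafted onto the rightmost leaf of this left sibling, or a move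
happens inside one of the trees. -/
inductive ForestMove : List (STerm S ar) → List (STerm S ar) → Prop
  | root (pre : List (STerm S ar)) (t t' : STerm S ar) (post : List (STerm S ar)) :
      t' ≠ STerm.leaf → ForestMove (pre ++ t :: t' :: post) (pre ++ t.graftRight t' :: post)
  | tree (pre : List (STerm S ar)) (t t' : STerm S ar) (post : List (STerm S ar)) :
      STerm.TermMove t t' → ForestMove (pre ++ t :: post) (pre ++ t' :: post)

/-- The relation `≼`: reflexive and transitive closure of the easterly wind move. -/
def EWLe (f f' : List (STerm S ar)) : Prop := Relation.ReflTransGen ForestMove f f'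

/-- Decoration word of a forest. -/
def forestDecs (f : List (STerm S ar)) : List S := (f.map STerm.decs).flatten

/-- Degree (number of internal nodes) of a forest. -/
def forestDeg (f : List (STerm S ar)) : ℕ := (f.map STerm.degree).sum

/-- Preorder indices (from 0) of the roots of the trees of a forest. -/
def rootIdxs : List (STerm S ar) → List ℕ
  | [] => []
  | t :: r => 0 :: (rootIdxs r).map (· + t.degree)

/-- Edges between internal nodes of a forest, numbered in preorder from 0. -/
def forestEdges : List (STerm S ar) → List (ℕ × ℕ × ℕ)
  | [] => []
  | t :: r => t.edges ++ (forestEdges r).map fun e => (e.1 + t.degree, e.2.1, e.2.2 + t.degree)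

/-- Grafting the terms of `l` onto the successive extremal leaves of `t`. -/
def underSub (t : STerm S ar) (l : List (STerm S ar)) : STerm S ar :=
  t.graftList (List.ofFn (n := t.arity) fun p =>
    if (p : ℕ) < t.arity - t.extremalCount then STerm.leaf
    else l.getD ((p : ℕ) - (t.arity - t.extremalCount)) STerm.leaf)

/-- The under product `f' △ f''` of two forests. -/
def underP (f' f'' : List (STerm S ar)) : List (STerm S ar) :=
  match f'.getLast? with
  | none => f''
  | some t => f'.dropLast ++ underSub t (f''.take t.extremalCount) :: f''.drop t.extremalCount

/-- The term `ι g` of degree 1 whose root is decorated by `g`. -/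
def iotaT (g : S) : STerm S ar := STerm.node g fun _ => STerm.leaf

/-- The minimal forest of the interval `W(w)`. -/
def fmin (w : List S) : List (STerm S ar) := w.map iotaT

/-- The maximal forest of the interval `W(w)`: `ι g₁ ∘₁ ι g₂ ∘₁ ⋯ ∘₁ ι g_ℓ`. -/
def fmax : List S → List (STerm S ar)
  | [] => []
  | g :: gs => [(gs.map iotaT).foldl STerm.graftFirst (iotaT g)]

end Forest
section Alphabet

variable {S : Type} {ar : S → ℕ}

/-- An `S`-forest-like alphabet: a type endowed with a root relation, decoration relations,
and edge relations. -/
structure ForestAlphabet (S : Type) (A : Type) where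
  Root : A → Prop
  Dec : S → A → Prop
  Edge : ℕ → A → A → Prop

/-- `f`-compatibility `w ⊩^A f` of a word `w` over a forest-like alphabet. -/
def ForestAlphabet.Compat {A : Type} (Al : ForestAlphabet S A) (w : List A)
    (f : List (STerm S ar)) : Prop :=
  w.length = forestDeg f ∧
  (∀ (i : ℕ) (hi : i < w.length), i ∈ rootIdxs f → Al.Root (w.get ⟨i, hi⟩)) ∧
  (∀ (i : ℕ) (hi : i < w.length) (hd : i < (forestDecs f).length),
      Al.Dec ((forestDecs f).get ⟨i, hd⟩) (w.get ⟨i, hi⟩)) ∧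
  (∀ p j q, (p, j, q) ∈ forestEdges f → ∀ (hp : p < w.length) (hq : q < w.length),
      Al.Edge j (w.get ⟨p, hp⟩) (w.get ⟨q, hq⟩))

/-- The disjoint sum of two forest-like alphabets. -/
def ForestAlphabet.dsum {A B : Type} (Al : ForestAlphabet S A) (Bl : ForestAlphabet S B) :
    ForestAlphabet S (A ⊕ B) where
  Root := Sum.elim Al.Root Bl.Root
  Dec g := Sum.elim (Al.Dec g) (Bl.Dec g)
  Edge j x y :=
    match x, y with
    | Sum.inl a, Sum.inl a' => Al.Edge j a a'
    | Sum.inr b, Sum.inr b' => Bl.Edge j b b'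
    | Sum.inl _, Sum.inr b => Bl.Root b
    | Sum.inr _, Sum.inl _ => False

/-- The alphabet `𝔸_S` with letters `a_{g,u}`, `g ∈ S`, `u ∈ ℕ*`. -/
def ASAlphabet (S : Type) : ForestAlphabet S (S × List ℕ) where
  Root a := ∃ ℓ, a.2 = List.replicate ℓ 0
  Dec g a := a.1 = g
  Edge j a a' := ∃ ℓ, a'.2 = a.2 ++ j :: List.replicate ℓ 0

/-- The alphabet `A_ℕ` with letters `a_i`, `i ∈ ℕ`, where every letter is a root, every letter
has every decoration, and `a_i →_j a_{i'}` iff `i < i'`. -/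
def ANAlphabet (S : Type) : ForestAlphabet S ℕ where
  Root _ := True
  Dec _ _ := True
  Edge _ i i' := i < i'

/-- The packing of a word of natural numbers. -/
def pck (w : List ℕ) : List ℕ :=
  w.map fun m => ((w.filter (· ≤ m)).dedup).length

end Alphabet
section Algebra

open scoped TensorProduct

variable {S : Type} {ar : S → ℕ}

/-- Reduced `S`-terms. -/
abbrev RTerm (S : Type) (ar : S → ℕ) := {t : STerm S ar // t ≠ STerm.leaf}

/-- The map `rd` keeping the non-leaf entries of a sequence of terms. -/
def rdF : List (STerm S ar) → List (RTerm S ar)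
  | [] => []
  | STerm.leaf :: r => rdF r
  | STerm.node g c :: r => ⟨STerm.node g c, fun h => nomatch h⟩ :: rdF r

/-- The natural Hopf algebra `N(S)` as a module: the monoid algebra of the free monoid on the
set of reduced `S`-terms. -/
abbrev NAlg (𝕂 : Type) [CommSemiring 𝕂] (S : Type) (ar : S → ℕ) :=
  MonoidAlgebra 𝕂 (FreeMonoid (RTerm S ar))

/-- The basis element `E_f` of `N(S)` indexed by a reduced forest `f`. -/
noncomputable def EBasis (𝕂 : Type) [CommSemiring 𝕂] {S : Type} {ar : S → ℕ}
    (f : List (RTerm S ar)) : NAlg 𝕂 S ar :=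
  MonoidAlgebra.of 𝕂 (FreeMonoid (RTerm S ar)) (FreeMonoid.ofList f)

/-- The coproduct `Δ` of `N(S)`, defined linearly on the basis by
`Δ E_f = Σ E_{rd(s₁…s_k)} ⊗ E_{rd(u₁…u_k)}`, the sum ranging over all factorizations
`t_m = s_m⟨ū_m⟩` of the entries of `f`. -/
noncomputable def DeltaN (𝕂 : Type) [CommSemiring 𝕂] (S : Type) (ar : S → ℕ) :
    NAlg 𝕂 S ar →ₗ[𝕂] (NAlg 𝕂 S ar) ⊗[𝕂] (NAlg 𝕂 S ar) :=
  (Finsupp.lift ((NAlg 𝕂 S ar) ⊗[𝕂] (NAlg 𝕂 S ar)) 𝕂 (FreeMonoid (RTerm S ar)) fun m =>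
    ∑ᶠ c ∈ {c : List (STerm S ar × List (STerm S ar)) |
        List.Forall₂ (fun p t => p.2.length = p.1.arity ∧ p.1.graftList p.2 = t.val) c
          (FreeMonoid.toList m)},
      (EBasis 𝕂 (rdF (c.map Prod.fst))) ⊗ₜ[𝕂] (EBasis 𝕂 (rdF (c.flatMap Prod.snd)))) ∘ₗ
    (MonoidAlgebra.coeffLinearEquiv 𝕂).toLinearMap

end Algebra


namespace AD

section Slices

/-- Partial sums. -/
def psum {n : ℕ} (d : Fin n → ℕ) (i : Fin n) : ℕ :=
  ∑ j : Fin n, if (j : ℕ) < (i : ℕ) then d j else 0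

theorem psum_zero {n : ℕ} (d : Fin (n+1) → ℕ) : psum d 0 = 0 := by
  simp [psum]

theorem psum_succ {n : ℕ} (d : Fin (n+1) → ℕ) (i : Fin n) :
    psum d i.succ = d 0 + psum (fun j => d j.succ) i := by
  simp [psum, Fin.sum_univ_succ]

theorem slice_flatten {α : Type} {n : ℕ} (d : Fin n → ℕ) (us : Fin n → List α)
    (h : ∀ i, (us i).length = d i) (i : Fin n) :
    ((List.ofFn us).flatten.drop (psum d i)).take (d i) = us i := by
  induction n with
  | zero => exact i.elim0
  | succ n ih =>
    rw [List.ofFn_succ, List.flatten_cons]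
    refine Fin.cases ?_ (fun i => ?_) i
    · rw [psum_zero, List.drop_zero, ← h 0, List.take_left]
    · rw [psum_succ, ← h 0, ← List.drop_drop, List.drop_left]
      exact ih (fun j => d j.succ) (fun j => us j.succ) (fun j => h _) i

theorem flatten_inj {α : Type} {n : ℕ} (us vs : Fin n → List α)
    (h : ∀ i, (us i).length = (vs i).length)
    (he : (List.ofFn us).flatten = (List.ofFn vs).flatten) : us = vs := by
  funext i
  have h1 := slice_flatten (fun i => (vs i).length) us h i
  have h2 := slice_flatten (fun i => (vs i).length) vs (fun _ => rfl) i
  rw [← h1, he, h2]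

theorem exists_flatten {α : Type} {n : ℕ} (d : Fin n → ℕ) (l : List α)
    (h : l.length = ∑ i, d i) :
    ∃ us : Fin n → List α, l = (List.ofFn us).flatten ∧ ∀ i, (us i).length = d i := by
  induction n generalizing l with
  | zero =>
    refine ⟨fun i => i.elim0, ?_, fun i => i.elim0⟩
    simpa using h
  | succ n ih =>
    rw [Fin.sum_univ_succ] at h
    obtain ⟨us, h1, h2⟩ := ih (fun j => d j.succ) (l.drop (d 0)) (by simp; omega)
    refine ⟨Fin.cons (l.take (d 0)) us, ?_, ?_⟩
    · simp [List.ofFn_succ, ← h1]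
    · intro i
      refine Fin.cases ?_ (fun i => ?_) i
      · simp; omega
      · simpa using h2 i

theorem map_eq_flatten {α β : Type} {n : ℕ} (f : α → β) (w : List α) (ms : Fin n → List β)
    (h : w.map f = (List.ofFn ms).flatten) :
    ∃ ws : Fin n → List α, w = (List.ofFn ws).flatten ∧ ∀ i, (ws i).map f = ms i := by
  have hl := congrArg List.length h
  obtain ⟨ws, h1, h2⟩ := exists_flatten (fun i => (ms i).length) w (by
    simpa [List.length_flatten, List.map_ofFn, List.sum_ofFn] using hl)
  refine ⟨ws, h1, fun i => ?_⟩
  have : (fun i => (ws i).map f) = ms := by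
    apply flatten_inj
    · intro i; simp [h2]
    · rw [← h, h1, List.map_flatten, List.map_ofFn]; rfl
  exact congrFun this i

theorem getElem?_flatten {α : Type} {n : ℕ} (d : Fin n → ℕ) (us : Fin n → List α)
    (h : ∀ i, (us i).length = d i) (i : Fin n) (q : ℕ) (hq : q < d i) :
    (List.ofFn us).flatten[psum d i + q]? = (us i)[q]? := by
  conv_rhs => rw [← slice_flatten d us h i]
  rw [List.getElem?_take, if_pos hq, List.getElem?_drop]

theorem length_flatten_ofFn {α : Type} {n : ℕ} (us : Fin n → List α) :
    (List.ofFn us).flatten.length = ∑ i, (us i).length := by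
  simp [List.length_flatten, List.map_ofFn, List.sum_ofFn]

theorem forall₂_flatten {α β : Type} (R : α → β → Prop) {n : ℕ} (us : Fin n → List α)
    (vs : Fin n → List β) (h : ∀ i, (us i).length = (vs i).length) :
    List.Forall₂ R (List.ofFn us).flatten (List.ofFn vs).flatten ↔
      ∀ i, List.Forall₂ R (us i) (vs i) := by
  constructor
  · intro H i
    have h1 := slice_flatten (fun i => (vs i).length) us h i
    have h2 := slice_flatten (fun i => (vs i).length) vs (fun _ => rfl) i
    have h3 := List.forall₂_take (vs i).length
      (List.forall₂_drop (psum (fun i => (vs i).length) i) H)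
    rwa [h1, h2] at h3
  · intro H
    induction n with
    | zero => simp
    | succ n ih =>
      rw [List.ofFn_succ, List.ofFn_succ, List.flatten_cons, List.flatten_cons]
      exact List.rel_append (H 0) (ih _ _ (fun i => h _) (fun i => H _))

end Slices

section Terms
variable {S : Type} {ar : S → ℕ}

theorem decs_length (t : STerm S ar) : t.decs.length = t.degree := by
  induction t with
  | leaf => rfl
  | node g c ih =>
    simp only [STerm.decs, STerm.degree, List.length_cons, length_flatten_ofFn, ih]
    omega

theorem forestDecs_length (f : List (STerm S ar)) : (forestDecs f).length = forestDeg f := by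
  induction f with
  | nil => rfl
  | cons t r ih =>
    simp only [forestDecs, forestDeg, List.map_cons, List.flatten_cons, List.length_append,
      List.sum_cons, decs_length] at *
    omega

/-- Partial sum of degrees is bounded. -/
theorem psum_add_le {n : ℕ} (d : Fin n → ℕ) (i : Fin n) : psum d i + d i ≤ ∑ j, d j := by
  induction n with
  | zero => exact i.elim0
  | succ n ih =>
    rw [Fin.sum_univ_succ]
    refine Fin.cases ?_ (fun i => ?_) i
    · rw [psum_zero]; omega
    · rw [psum_succ]
      have := ih (fun j => d j.succ) i
      omega

theorem mem_edges_node (g : S) (c : Fin (ar g) → STerm S ar) (e : ℕ × ℕ × ℕ) :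
    e ∈ (STerm.node g c).edges ↔ ∃ i : Fin (ar g),
      (c i ≠ STerm.leaf ∧ e = (0, (i : ℕ) + 1, 1 + psum (fun j => (c j).degree) i)) ∨
      ∃ e' ∈ (c i).edges, e = (e'.1 + (1 + psum (fun j => (c j).degree) i), e'.2.1,
        e'.2.2 + (1 + psum (fun j => (c j).degree) i)) := by
  simp only [STerm.edges, List.mem_flatten, List.mem_ofFn]
  constructor
  · rintro ⟨_, ⟨i, rfl⟩, h⟩
    refine ⟨i, ?_⟩
    rw [List.mem_append] at h
    rcases h with h | h
    · left
      cases hc : c i with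
      | leaf => simp [hc] at h
      | node g' c' =>
        simp only [hc, List.mem_singleton] at h
        exact ⟨by simp, h⟩
    · right
      rw [List.mem_map] at h
      obtain ⟨e', h1, h2⟩ := h
      exact ⟨e', h1, h2.symm⟩
  · rintro ⟨i, h⟩
    refine ⟨_, ⟨i, rfl⟩, ?_⟩
    rw [List.mem_append]
    rcases h with ⟨h1, h2⟩ | ⟨e', h1, h2⟩
    · left
      cases hc : c i with
      | leaf => exact absurd hc h1
      | node g' c' =>
        simp only [List.mem_singleton]
        exact h2
    · right
      rw [List.mem_map]
      exact ⟨e', h1, h2.symm⟩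

theorem degree_pos {t : STerm S ar} (h : t ≠ STerm.leaf) : 0 < t.degree := by
  cases t with
  | leaf => exact absurd rfl h
  | node g c => simp only [STerm.degree]; omega

theorem edges_bound (t : STerm S ar) : ∀ e ∈ t.edges, e.1 < t.degree ∧ e.2.2 < t.degree := by
  induction t with
  | leaf => intro e he; simp [STerm.edges] at he
  | node g c ih =>
    intro e he
    rw [mem_edges_node] at he
    obtain ⟨i, ⟨h1, h2⟩ | ⟨e', h1, h2⟩⟩ := he
    · have := psum_add_le (fun j => (c j).degree) i
      have := degree_pos h1
      subst h2
      simp only [STerm.degree]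
      omega
    · have := psum_add_le (fun j => (c j).degree) i
      have := ih i e' h1
      subst h2
      simp only [STerm.degree]
      omega

variable {A B : Type}

/-- Recursive compatibility of a word with a term. -/
def TC (Al : ForestAlphabet S A) : STerm S ar → (A → Prop) → List A → Prop
  | .leaf, _, w => w = []
  | .node g c, P, w => ∃ (a : A) (ws : Fin (ar g) → List A),
      w = a :: (List.ofFn ws).flatten ∧ P a ∧ Al.Dec g a ∧
        ∀ i, TC Al (c i) (Al.Edge ((i : ℕ) + 1) a) (ws i)

/-- Recursive compatibility of a word with a forest. -/
def FC (Al : ForestAlphabet S A) : List (STerm S ar) → List A → Prop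
  | [], w => w = []
  | t :: r, w => ∃ w1 w2, w = w1 ++ w2 ∧ TC Al t Al.Root w1 ∧ FC Al r w2

theorem TC_length (Al : ForestAlphabet S A) (t : STerm S ar) (P : A → Prop) (w : List A)
    (h : TC Al t P w) : w.length = t.degree := by
  induction t generalizing P w with
  | leaf => simp only [TC] at h; subst h; rfl
  | node g c ih =>
    obtain ⟨a, ws, rfl, -, -, h⟩ := h
    rw [List.length_cons, length_flatten_ofFn, STerm.degree, add_comm]
    congr 1
    exact Finset.sum_congr rfl fun i _ => ih i _ _ (h i)

theorem FC_length (Al : ForestAlphabet S A) (f : List (STerm S ar)) (w : List A)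
    (h : FC Al f w) : w.length = forestDeg f := by
  induction f generalizing w with
  | nil => simp only [FC] at h; subst h; rfl
  | cons t r ih =>
    obtain ⟨w1, w2, rfl, h1, h2⟩ := h
    simp [forestDeg, TC_length _ _ _ _ h1, ih _ h2]

theorem TC_node (Al : ForestAlphabet S A) (g : S) (c : Fin (ar g) → STerm S ar) (P : A → Prop)
    (a : A) (ws : Fin (ar g) → List A) (h : ∀ i, (ws i).length = (c i).degree) :
    TC Al (.node g c) P (a :: (List.ofFn ws).flatten) ↔ P a ∧ Al.Dec g a ∧
        ∀ i, TC Al (c i) (Al.Edge ((i : ℕ) + 1) a) (ws i) := by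
  constructor
  · rintro ⟨a', ws', h1, h2, h3, h4⟩
    rw [List.cons.injEq] at h1
    obtain ⟨rfl, h1⟩ := h1
    have : ws = ws' := flatten_inj _ _ (fun i => by rw [h, TC_length _ _ _ _ (h4 i)]) h1
    subst this
    exact ⟨h2, h3, h4⟩
  · rintro ⟨h2, h3, h4⟩
    exact ⟨a, ws, rfl, h2, h3, h4⟩

theorem FC_cons (Al : ForestAlphabet S A) (t : STerm S ar) (r : List (STerm S ar))
    (w1 w2 : List A) (h : w1.length = t.degree) :
    FC Al (t :: r) (w1 ++ w2) ↔ TC Al t Al.Root w1 ∧ FC Al r w2 := by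
  constructor
  · rintro ⟨v1, v2, h1, h2, h3⟩
    obtain ⟨rfl, rfl⟩ := List.append_inj h1 (by rw [h, TC_length _ _ _ _ h2])
    exact ⟨h2, h3⟩
  · rintro ⟨h2, h3⟩
    exact ⟨_, _, rfl, h2, h3⟩

theorem FC_append (Al : ForestAlphabet S A) (f1 f2 : List (STerm S ar))
    (w1 w2 : List A) (h : w1.length = forestDeg f1) :
    FC Al (f1 ++ f2) (w1 ++ w2) ↔ FC Al f1 w1 ∧ FC Al f2 w2 := by
  induction f1 generalizing w1 with
  | nil =>
    have : w1 = [] := by simpa [forestDeg] using h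
    subst this
    simp [FC]
  | cons t r ih =>
    have h' : w1.length = t.degree + forestDeg r := by simpa [forestDeg] using h
    obtain ⟨v1, v2, rfl, hv⟩ : ∃ v1 v2, w1 = v1 ++ v2 ∧ v1.length = t.degree :=
      ⟨w1.take t.degree, w1.drop t.degree, by simp, by simp; omega⟩
    rw [List.cons_append, List.append_assoc, FC_cons _ _ _ _ _ hv, FC_cons _ _ _ _ _ hv,
      ih _ (by simp at h'; omega), and_assoc]

theorem FC_flatten (Al : ForestAlphabet S A) {n : ℕ} (us : Fin n → List (STerm S ar))
    (ws : Fin n → List A) (h : ∀ i, (ws i).length = forestDeg (us i)) :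
    FC Al (List.ofFn us).flatten (List.ofFn ws).flatten ↔ ∀ i, FC Al (us i) (ws i) := by
  induction n with
  | zero => simp [FC]
  | succ n ih =>
    rw [List.ofFn_succ, List.ofFn_succ, List.flatten_cons, List.flatten_cons,
      FC_append _ _ _ _ _ (h 0), ih _ _ (fun i => h _), Fin.forall_fin_succ]

theorem FC_rdF (Al : ForestAlphabet S A) (f : List (STerm S ar)) (w : List A) :
    FC Al ((rdF f).map Subtype.val) w ↔ FC Al f w := by
  induction f generalizing w with
  | nil => rfl
  | cons t r ih =>
    cases t with
    | leaf => rw [rdF, ih]; simp [FC, TC]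
    | node g c => simp only [rdF, FC, List.map_cons, ih]

theorem rdF_reduced (f : List (STerm S ar)) : IsReducedF ((rdF f).map Subtype.val) := by
  intro t ht
  rw [List.mem_map] at ht
  obtain ⟨x, -, rfl⟩ := ht
  exact x.2

/-- Index version of term compatibility. -/
def TCI (Al : ForestAlphabet S A) (t : STerm S ar) (P : A → Prop) (w : List A) : Prop :=
  w.length = t.degree ∧ (t ≠ .leaf → ∀ a, w[0]? = some a → P a) ∧
  List.Forall₂ Al.Dec t.decs w ∧
  ∀ e ∈ t.edges, ∀ a b, w[e.1]? = some a → w[e.2.2]? = some b → Al.Edge e.2.1 a b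

theorem TCI_iff (Al : ForestAlphabet S A) (t : STerm S ar) (P : A → Prop) (w : List A) :
    TCI Al t P w ↔ TC Al t P w := by
  induction t generalizing P w with
  | leaf =>
    simp only [TCI, TC, STerm.degree, STerm.decs, STerm.edges]
    constructor
    · rintro ⟨h, -⟩; simpa using h
    · rintro rfl; simp
  | node g c ih =>
    by_cases hl : w.length = (STerm.node g c).degree
    swap
    · exact ⟨fun h => absurd h.1 hl, fun h => absurd (TC_length _ _ _ _ h) hl⟩
    cases w with
    | nil => simp [STerm.degree] at hl; omega
    | cons a w =>
    obtain ⟨ws, rfl, hws⟩ := exists_flatten (fun i => (c i).degree) w (by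
      simp only [STerm.degree, List.length_cons] at hl; omega)
    rw [TC_node _ _ _ _ _ _ hws]
    have key : ∀ (i : Fin (ar g)) (q : ℕ), q < (c i).degree →
        (a :: (List.ofFn ws).flatten)[q + (1 + psum (fun j => (c j).degree) i)]? =
          (ws i)[q]? := by
      intro i q hq
      rw [← getElem?_flatten _ ws hws i q hq,
        show q + (1 + psum (fun j => (c j).degree) i) = (psum (fun j => (c j).degree) i + q) + 1
          by omega, List.getElem?_cons_succ]
    simp only [← ih, TCI]
    rw [STerm.decs, List.forall₂_cons,
      forall₂_flatten _ _ _ (fun i => by rw [decs_length, hws])]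
    constructor
    · rintro ⟨-, h1, ⟨h2, h3⟩, h4⟩
      refine ⟨h1 (by simp) a (by simp), h2, fun i => ⟨hws i, fun hne b hb => ?_, h3 i, ?_⟩⟩
      · refine h4 (0, (i : ℕ) + 1, 1 + psum (fun j => (c j).degree) i) ?_ a b (by simp) ?_
        · rw [mem_edges_node]; exact ⟨i, Or.inl ⟨hne, rfl⟩⟩
        · have := key i 0 (degree_pos hne)
          rw [zero_add] at this
          rw [this, hb]
      · intro e he x y hx hy
        have hb := edges_bound _ e he
        refine h4 (e.1 + (1 + psum (fun j => (c j).degree) i), e.2.1,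
          e.2.2 + (1 + psum (fun j => (c j).degree) i)) ?_ x y ?_ ?_
        · rw [mem_edges_node]; exact ⟨i, Or.inr ⟨e, he, rfl⟩⟩
        · rw [key i _ hb.1, hx]
        · rw [key i _ hb.2, hy]
    · rintro ⟨h1, h2, h3⟩
      refine ⟨hl, fun _ x hx => ?_, ⟨h2, fun i => (h3 i).2.2.1⟩, ?_⟩
      · simp at hx; subst hx; exact h1
      · intro e he x y hx hy
        rw [mem_edges_node] at he
        obtain ⟨i, ⟨hne, rfl⟩ | ⟨e', he', rfl⟩⟩ := he
        · have := key i 0 (degree_pos hne)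
          rw [zero_add] at this
          simp only [this] at hy
          simp at hx
          subst hx
          exact (h3 i).2.1 hne y hy
        · have hb := edges_bound _ e' he'
          simp only [key i _ hb.1, key i _ hb.2] at hx hy
          exact (h3 i).2.2.2 e' he' x y hx hy

theorem forestEdges_bound (f : List (STerm S ar)) :
    ∀ e ∈ forestEdges f, e.1 < forestDeg f ∧ e.2.2 < forestDeg f := by
  induction f with
  | nil => intro e he; simp [forestEdges] at he
  | cons t r ih =>
    intro e he
    have hd : forestDeg (t :: r) = t.degree + forestDeg r := by simp [forestDeg]
    simp only [forestEdges, List.mem_append, List.mem_map] at he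
    rcases he with he | ⟨e', he, rfl⟩
    · have := edges_bound _ _ he; omega
    · have := ih _ he; simp only; omega

/-- Compatibility restated with optional indexing. -/
def CI (Al : ForestAlphabet S A) (w : List A) (f : List (STerm S ar)) : Prop :=
  w.length = forestDeg f ∧
  (∀ i ∈ rootIdxs f, ∀ a, w[i]? = some a → Al.Root a) ∧
  List.Forall₂ Al.Dec (forestDecs f) w ∧
  ∀ e ∈ forestEdges f, ∀ a b, w[e.1]? = some a → w[e.2.2]? = some b → Al.Edge e.2.1 a b

theorem Compat_iff_CI (Al : ForestAlphabet S A) (w : List A) (f : List (STerm S ar)) :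
    Al.Compat w f ↔ CI Al w f := by
  unfold ForestAlphabet.Compat CI
  refine and_congr_right fun hl => ?_
  refine and_congr ?_ (and_congr ?_ ?_)
  · simp only [List.getElem?_eq_some_iff, List.get_eq_getElem]
    constructor
    · rintro h i hi a ⟨h1, rfl⟩; exact h i h1 hi
    · intro h i hi h1; exact h i h1 _ ⟨hi, rfl⟩
  · rw [List.forall₂_iff_get]
    constructor
    · intro h; exact ⟨by rw [forestDecs_length, hl], fun i h1 h2 => h i h2 h1⟩
    · rintro ⟨-, h⟩ i h1 h2; exact h i h2 h1
  · simp only [List.getElem?_eq_some_iff, List.get_eq_getElem]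
    constructor
    · rintro h ⟨p, j, q⟩ he a b ⟨h1, rfl⟩ ⟨h2, rfl⟩; exact h p j q he h1 h2
    · intro h p j q he h1 h2; exact h _ he _ _ ⟨h1, rfl⟩ ⟨h2, rfl⟩

theorem CI_iff_FC (Al : ForestAlphabet S A) (w : List A) (f : List (STerm S ar))
    (hf : IsReducedF f) : CI Al w f ↔ FC Al f w := by
  induction f generalizing w with
  | nil =>
    simp only [CI, FC, forestDeg, rootIdxs, forestDecs, forestEdges]
    constructor
    · rintro ⟨h, -⟩; simpa using h
    · rintro rfl; simp
  | cons t r ih =>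
    have ht : t ≠ .leaf := hf t (by simp)
    have hr : IsReducedF r := fun x hx => hf x (by simp [hx])
    have hd : forestDeg (t :: r) = t.degree + forestDeg r := by simp [forestDeg]
    have hp := degree_pos ht
    by_cases hl : w.length = forestDeg (t :: r)
    swap
    · exact ⟨fun h => absurd h.1 hl, fun h => absurd (FC_length _ _ _ h) hl⟩
    obtain ⟨w1, w2, rfl, hw⟩ : ∃ v1 v2, w = v1 ++ v2 ∧ v1.length = t.degree :=
      ⟨w.take t.degree, w.drop t.degree, by simp, by simp; omega⟩
    have hw2 : w2.length = forestDeg r := by simp at hl; omega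
    rw [FC_cons _ _ _ _ _ hw, ← ih _ hr, ← TCI_iff]
    have k1 : ∀ q, q < t.degree → (w1 ++ w2)[q]? = w1[q]? := fun q hq =>
      List.getElem?_append_left (by omega)
    have k2 : ∀ q, (w1 ++ w2)[q + t.degree]? = w2[q]? := fun q => by
      rw [List.getElem?_append_right (by omega)]; congr 1; omega
    have hdec : List.Forall₂ Al.Dec (forestDecs (t :: r)) (w1 ++ w2) ↔
        List.Forall₂ Al.Dec t.decs w1 ∧ List.Forall₂ Al.Dec (forestDecs r) w2 := by
      have : forestDecs (t :: r) = t.decs ++ forestDecs r := by simp [forestDecs]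
      rw [this]
      constructor
      · intro h
        have a1 := List.forall₂_take t.degree h
        have a2 := List.forall₂_drop t.degree h
        rw [← decs_length t, List.take_left, decs_length, ← hw, List.take_left] at a1
        rw [← decs_length t, List.drop_left, decs_length, ← hw, List.drop_left] at a2
        exact ⟨a1, a2⟩
      · rintro ⟨h1, h2⟩; exact List.rel_append h1 h2
    unfold CI TCI
    rw [hdec]
    simp only [rootIdxs, forestEdges, List.mem_cons, List.mem_append, List.mem_map]
    constructor
    · rintro ⟨-, h1, ⟨h2, h3⟩, h4⟩
      refine ⟨⟨hw, fun _ a ha => h1 0 (Or.inl rfl) a (by rw [k1 _ hp, ha]), h2, ?_⟩,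
        hw2, ?_, h3, ?_⟩
      · intro e he a b ha hb
        have := edges_bound _ _ he
        exact h4 e (Or.inl he) a b (by rw [k1 _ this.1, ha]) (by rw [k1 _ this.2, hb])
      · intro i hi a ha
        exact h1 _ (Or.inr ⟨i, hi, rfl⟩) a (by rw [k2, ha])
      · intro e he a b ha hb
        exact h4 _ (Or.inr ⟨e, he, rfl⟩) a b (by rw [k2, ha]) (by rw [k2, hb])
    · rintro ⟨⟨-, h1, h2, h3⟩, -, h4, h5, h6⟩
      refine ⟨hl, ?_, ⟨h2, h5⟩, ?_⟩
      · rintro i (rfl | ⟨i, hi, rfl⟩) a ha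
        · exact h1 ht a (by rw [← k1 _ hp, ha])
        · exact h4 i hi a (by rw [← k2, ha])
      · rintro e (he | ⟨e, he, rfl⟩) a b ha hb
        · have := edges_bound _ _ he
          exact h3 e he a b (by rw [← k1 _ this.1, ha]) (by rw [← k1 _ this.2, hb])
        · simp only [k2] at ha hb
          exact h6 e he a b ha hb

theorem Compat_iff (Al : ForestAlphabet S A) (w : List A) (f : List (STerm S ar))
    (hf : IsReducedF f) : Al.Compat w f ↔ FC Al f w :=
  (Compat_iff_CI _ _ _).trans (CI_iff_FC _ _ _ hf)

theorem Compat_rdF (Al : ForestAlphabet S A) (w : List A) (f : List (STerm S ar)) :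
    Al.Compat w ((rdF f).map Subtype.val) ↔ FC Al f w :=
  (Compat_iff _ _ _ (rdF_reduced f)).trans (FC_rdF _ _ _)

/-- The subword of letters of `A`. -/
abbrev lefts (w : List (A ⊕ B)) : List A := w.filterMap Sum.getLeft?

/-- The subword of letters of `B`. -/
abbrev rights (w : List (A ⊕ B)) : List B := w.filterMap Sum.getRight?

theorem lefts_inl (a : A) (w : List (A ⊕ B)) : lefts (Sum.inl a :: w) = a :: lefts w := rfl
theorem lefts_inr (b : B) (w : List (A ⊕ B)) : lefts (Sum.inr b :: w) = lefts w := rfl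
theorem rights_inl (a : A) (w : List (A ⊕ B)) : rights (Sum.inl a :: w) = rights w := rfl
theorem rights_inr (b : B) (w : List (A ⊕ B)) : rights (Sum.inr b :: w) = b :: rights w := rfl

theorem lefts_flatten {n : ℕ} (ws : Fin n → List (A ⊕ B)) :
    lefts (List.ofFn ws).flatten = (List.ofFn fun i => lefts (ws i)).flatten := by
  rw [lefts, List.filterMap_flatten, List.map_ofFn]; rfl

theorem rights_flatten {n : ℕ} (ws : Fin n → List (A ⊕ B)) :
    rights (List.ofFn ws).flatten = (List.ofFn fun i => rights (ws i)).flatten := by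
  rw [rights, List.filterMap_flatten, List.map_ofFn]; rfl

theorem lefts_map_inr (v : List B) : lefts (v.map (Sum.inr : B → A ⊕ B)) = [] := by
  induction v with
  | nil => rfl
  | cons b v ih => rw [List.map_cons, lefts_inr, ih]

theorem rights_map_inr (v : List B) : rights (v.map (Sum.inr : B → A ⊕ B)) = v := by
  induction v with
  | nil => rfl
  | cons b v ih =>
    rw [List.map_cons, rights_inr, ih]

theorem eq_map_inr (w : List (A ⊕ B)) (n : ℕ) (h : w.map Sum.isLeft = List.replicate n false) :
    w = (rights w).map Sum.inr := by
  induction w generalizing n with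
  | nil => rfl
  | cons x w ih =>
    cases n with
    | zero => simp at h
    | succ n =>
      rw [List.replicate_succ, List.map_cons, List.cons.injEq] at h
      have := ih n h.2
      cases x with
      | inl a => simp at h
      | inr b =>
        rw [rights_inr, List.map_cons, ← this]

theorem map_isLeft_map_inr (v : List B) :
    (v.map (Sum.inr : B → A ⊕ B)).map Sum.isLeft = List.replicate v.length false := by
  induction v with
  | nil => rfl
  | cons b v ih => simp_all [List.replicate_succ]

theorem lefts_length (w : List (A ⊕ B)) : (lefts w).length = (w.map Sum.isLeft).count true := by
  induction w with
  | nil => rfl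
  | cons x w ih =>
    cases x with
    | inl a => rw [lefts_inl, List.length_cons, ih]; simp
    | inr b => rw [lefts_inr, ih]; simp

theorem rights_length (w : List (A ⊕ B)) :
    (rights w).length = (w.map Sum.isLeft).count false := by
  induction w with
  | nil => rfl
  | cons x w ih =>
    cases x with
    | inl a => rw [rights_inl, ih]; simp
    | inr b => rw [rights_inr, List.length_cons, ih]; simp

theorem word_unique (w v : List (A ⊕ B)) (hm : w.map Sum.isLeft = v.map Sum.isLeft)
    (hl : lefts w = lefts v) (hr : rights w = rights v) : w = v := by
  induction w generalizing v with
  | nil => cases v with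
    | nil => rfl
    | cons y v => simp at hm
  | cons x w ih =>
    cases v with
    | nil => simp at hm
    | cons y v =>
      rw [List.map_cons, List.map_cons, List.cons.injEq] at hm
      cases x with
      | inl a =>
        cases y with
        | inl a' =>
          rw [lefts_inl, lefts_inl, List.cons.injEq] at hl
          rw [rights_inl, rights_inl] at hr
          rw [hl.1, ih v hm.2 hl.2 hr]
        | inr b' => simp at hm
      | inr b =>
        cases y with
        | inl a' => simp at hm
        | inr b' =>
          rw [rights_inr, rights_inr, List.cons.injEq] at hr
          rw [lefts_inr, lefts_inr] at hl
          rw [hr.1, ih v hm.2 hl hr.2]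

theorem word_exists (m : List Bool) (w' : List A) (w'' : List B)
    (hl : w'.length = m.count true) (hr : w''.length = m.count false) :
    ∃ w : List (A ⊕ B), w.map Sum.isLeft = m ∧ lefts w = w' ∧ rights w = w'' := by
  induction m generalizing w' w'' with
  | nil =>
    refine ⟨[], rfl, ?_, ?_⟩
    · simp at hl; simp [hl]
    · simp at hr; simp [hr]
  | cons b m ih =>
    cases b with
    | true =>
      cases w' with
      | nil => simp at hl
      | cons a w' =>
        obtain ⟨w, h1, h2, h3⟩ := ih w' w'' (by simpa using hl) (by simpa using hr)
        refine ⟨Sum.inl a :: w, by simp [h1], ?_, ?_⟩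
        · rw [lefts_inl, h2]
        · rw [rights_inl, h3]
    | false =>
      cases w'' with
      | nil => simp at hr
      | cons a w'' =>
        obtain ⟨w, h1, h2, h3⟩ := ih w' w'' (by simpa using hl) (by simpa using hr)
        refine ⟨Sum.inr a :: w, by simp [h1], ?_, ?_⟩
        · rw [lefts_inr, h2]
        · rw [rights_inr, h3]

/-- The preorder word telling which internal nodes of `s⟨l⟩` come from `s`. -/
def mask : STerm S ar → List (STerm S ar) → List Bool
  | .leaf, l => List.replicate (l.headD .leaf).degree false
  | .node g c, l =>
      true :: (List.ofFn fun i => mask (c i)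
          ((l.drop (psum (fun j => (c j).arity) i)).take (c i).arity)).flatten

theorem mask_node (g : S) (c : Fin (ar g) → STerm S ar) (us : Fin (ar g) → List (STerm S ar))
    (h : ∀ i, (us i).length = (c i).arity) :
    mask (.node g c) (List.ofFn us).flatten =
      true :: (List.ofFn fun i => mask (c i) (us i)).flatten := by
  rw [mask]
  congr 4
  funext i
  rw [slice_flatten _ _ h]

theorem graft_node (g : S) (c : Fin (ar g) → STerm S ar) (us : Fin (ar g) → List (STerm S ar))
    (h : ∀ i, (us i).length = (c i).arity) :
    (STerm.node g c).graftList (List.ofFn us).flatten =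
      .node g fun i => (c i).graftList (us i) := by
  rw [STerm.graftList]
  congr 1
  funext i
  have := slice_flatten _ _ h i
  rw [psum] at this
  rw [this]

theorem exists_us (g : S) (c : Fin (ar g) → STerm S ar) (u : List (STerm S ar))
    (h : u.length = (STerm.node g c).arity) :
    ∃ us : Fin (ar g) → List (STerm S ar), u = (List.ofFn us).flatten ∧
      ∀ i, (us i).length = (c i).arity :=
  exists_flatten _ u h

theorem mask_length (s : STerm S ar) (u : List (STerm S ar)) (h : u.length = s.arity) :
    (mask s u).length = (s.graftList u).degree := by
  induction s generalizing u with
  | leaf => simp [mask, STerm.graftList]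
  | node g c ih =>
    obtain ⟨us, rfl, hus⟩ := exists_us g c u h
    rw [mask_node _ _ _ hus, graft_node _ _ _ hus, STerm.degree, List.length_cons,
      length_flatten_ofFn, add_comm]
    congr 1
    exact Finset.sum_congr rfl fun i _ => ih i _ (hus i)

theorem count_flatten_ofFn {n : ℕ} (b : Bool) (ms : Fin n → List Bool) :
    (List.ofFn ms).flatten.count b = ∑ i, (ms i).count b := by
  rw [List.count_flatten, List.map_ofFn, List.sum_ofFn]; rfl

theorem forestDeg_append (f1 f2 : List (STerm S ar)) :
    forestDeg (f1 ++ f2) = forestDeg f1 + forestDeg f2 := by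
  simp [forestDeg]

theorem forestDeg_flatten {n : ℕ} (us : Fin n → List (STerm S ar)) :
    forestDeg (List.ofFn us).flatten = ∑ i, forestDeg (us i) := by
  induction n with
  | zero => simp [forestDeg]
  | succ n ih =>
    rw [List.ofFn_succ, List.flatten_cons, forestDeg_append, ih, Fin.sum_univ_succ]

theorem mask_count_true (s : STerm S ar) (u : List (STerm S ar)) (h : u.length = s.arity) :
    (mask s u).count true = s.degree := by
  induction s generalizing u with
  | leaf => simp [mask, STerm.degree, List.count_replicate]
  | node g c ih =>
    obtain ⟨us, rfl, hus⟩ := exists_us g c u h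
    rw [mask_node _ _ _ hus, STerm.degree, List.count_cons_self, count_flatten_ofFn, add_comm]
    congr 1
    exact Finset.sum_congr rfl fun i _ => ih i _ (hus i)

theorem mask_count_false (s : STerm S ar) (u : List (STerm S ar)) (h : u.length = s.arity) :
    (mask s u).count false = forestDeg u := by
  induction s generalizing u with
  | leaf =>
    rw [STerm.arity, List.length_eq_one_iff] at h
    obtain ⟨t, rfl⟩ := h
    simp [mask, forestDeg]
  | node g c ih =>
    obtain ⟨us, rfl, hus⟩ := exists_us g c u h
    rw [mask_node _ _ _ hus, List.count_cons_of_ne (by simp), count_flatten_ofFn,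
      forestDeg_flatten]
    exact Finset.sum_congr rfl fun i _ => ih i _ (hus i)

theorem mask_unique (s s' : STerm S ar) (u u' : List (STerm S ar)) (h : u.length = s.arity)
    (h' : u'.length = s'.arity) (hg : s.graftList u = s'.graftList u')
    (hm : mask s u = mask s' u') : s = s' ∧ u = u' := by
  induction s generalizing s' u u' with
  | leaf =>
    cases s' with
    | leaf =>
      rw [STerm.arity, List.length_eq_one_iff] at h h'
      obtain ⟨t, rfl⟩ := h
      obtain ⟨t', rfl⟩ := h'
      simp [STerm.graftList] at hg
      simp [hg]
    | node g c =>
      simp only [mask] at hm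
      cases hd : (u.headD STerm.leaf).degree <;> rw [hd] at hm <;> simp [List.replicate_succ] at hm
  | node g c ih =>
    cases s' with
    | leaf =>
      simp only [mask] at hm
      cases hd : (u'.headD STerm.leaf).degree <;> rw [hd] at hm <;> simp [List.replicate_succ] at hm
    | node g' c' =>
      obtain ⟨us, rfl, hus⟩ := exists_us g c u h
      obtain ⟨us', rfl, hus'⟩ := exists_us g' c' u' h'
      rw [graft_node _ _ _ hus, graft_node _ _ _ hus', STerm.node.injEq] at hg
      obtain ⟨rfl, hg⟩ := hg
      have hg := eq_of_heq hg
      rw [mask_node _ _ _ hus, mask_node _ _ _ hus', List.cons.injEq] at hm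
      have hm' := flatten_inj _ _ (fun i => by
        rw [mask_length _ _ (hus i), mask_length _ _ (hus' i), congrFun hg i]) hm.2
      have key := fun i => ih i (c' i) (us i) (us' i) (hus i) (hus' i) (congrFun hg i)
        (congrFun hm' i)
      have e1 : c = c' := funext fun i => (key i).1
      have e2 : us = us' := funext fun i => (key i).2
      subst e1 e2
      exact ⟨rfl, rfl⟩

variable (Al : ForestAlphabet S A) (Bl : ForestAlphabet S B)

theorem dsum_edge_inl (j : ℕ) (a : A) :
    (Al.dsum Bl).Edge j (Sum.inl a) = Sum.elim (Al.Edge j a) Bl.Root := by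
  funext y; cases y <;> rfl

theorem dsum_edge_inr (j : ℕ) (b : B) :
    (Al.dsum Bl).Edge j (Sum.inr b) = Sum.elim (fun _ => False) (Bl.Edge j b) := by
  funext y; cases y <;> rfl

theorem TC_false (t : STerm S ar) (Q : B → Prop) (w : List (A ⊕ B))
    (h : TC (Al.dsum Bl) t (Sum.elim (fun _ => False) Q) w) :
    w.map Sum.isLeft = List.replicate t.degree false := by
  induction t generalizing Q w with
  | leaf => simp only [TC] at h; subst h; rfl
  | node g c ih =>
    have hlen := TC_length _ _ _ _ h
    obtain ⟨a, ws, rfl, h1, h2, h3⟩ := h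
    cases a with
    | inl a => exact h1.elim
    | inr b =>
      simp only [dsum_edge_inr] at h3
      rw [List.eq_replicate_iff]
      refine ⟨by rw [List.length_map, hlen], ?_⟩
      intro x hx
      rw [List.map_cons, List.mem_cons] at hx
      rcases hx with rfl | hx
      · rfl
      · rw [List.mem_map] at hx
        obtain ⟨y, hy, rfl⟩ := hx
        rw [List.mem_flatten] at hy
        obtain ⟨l, hl, hy⟩ := hy
        rw [List.mem_ofFn] at hl
        obtain ⟨i, rfl⟩ := hl
        have := ih i _ _ (h3 i)
        exact (List.eq_replicate_iff.1 this).2 _ (List.mem_map_of_mem hy)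

theorem TC_inr (t : STerm S ar) (P : A → Prop) (Q : B → Prop) (v : List B) :
    TC (Al.dsum Bl) t (Sum.elim P Q) (v.map Sum.inr) ↔ TC Bl t Q v := by
  induction t generalizing P Q v with
  | leaf => simp [TC]
  | node g c ih =>
    by_cases hl : v.length = (STerm.node g c).degree
    swap
    · exact ⟨fun h => absurd (by simpa using TC_length _ _ _ _ h) hl,
        fun h => absurd (TC_length _ _ _ _ h) hl⟩
    cases v with
    | nil => simp [STerm.degree] at hl; omega
    | cons b v =>
    obtain ⟨vs, rfl, hvs⟩ := exists_flatten (fun i => (c i).degree) v (by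
      simp only [STerm.degree, List.length_cons] at hl; omega)
    have : (b :: (List.ofFn vs).flatten).map (Sum.inr : B → A ⊕ B) =
        Sum.inr b :: (List.ofFn fun i => (vs i).map Sum.inr).flatten := by
      rw [List.map_cons, List.map_flatten, List.map_ofFn]; rfl
    rw [this, TC_node _ _ _ _ _ _ hvs, TC_node _ _ _ _ _ _ (by simpa using hvs)]
    simp only [dsum_edge_inr, ih]
    rfl

theorem key_term (s : STerm S ar) (P : A → Prop) (u : List (STerm S ar)) (w : List (A ⊕ B))
    (h : u.length = s.arity) (hm : w.map Sum.isLeft = mask s u) :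
    TC (Al.dsum Bl) (s.graftList u) (Sum.elim P Bl.Root) w ↔
      TC Al s P (lefts w) ∧ FC Bl u (rights w) := by
  induction s generalizing P u w with
  | leaf =>
    rw [STerm.arity, List.length_eq_one_iff] at h
    obtain ⟨t, rfl⟩ := h
    have := eq_map_inr _ _ hm
    rw [this, rights_map_inr, lefts_map_inr]
    simp only [STerm.graftList, List.headD_cons, TC_inr]
    simp [TC, FC]
  | node g c ih =>
    obtain ⟨us, rfl, hus⟩ := exists_us g c u h
    rw [mask_node _ _ _ hus] at hm
    cases w with
    | nil => simp at hm
    | cons x w =>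
    rw [List.map_cons, List.cons.injEq] at hm
    cases x with
    | inr b => simp at hm
    | inl a =>
    obtain ⟨ws, rfl, hws⟩ := map_eq_flatten _ _ _ hm.2
    have e1 : lefts (Sum.inl a :: (List.ofFn ws).flatten) =
        a :: (List.ofFn fun i => lefts (ws i)).flatten := by
      rw [← lefts_flatten]; rfl
    have e2 : rights (Sum.inl a :: (List.ofFn ws).flatten) =
        (List.ofFn fun i => rights (ws i)).flatten := by
      rw [← rights_flatten]; rfl
    rw [e1, e2, graft_node _ _ _ hus, TC_node, TC_node, FC_flatten]
    · simp only [dsum_edge_inl]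
      rw [forall_congr' fun i => ih i _ (us i) (ws i) (hus i) (hws i), forall_and]
      simp only [and_assoc]
      rfl
    · intro i; rw [rights_length, hws, mask_count_false _ _ (hus i)]
    · intro i; rw [lefts_length, hws, mask_count_true _ _ (hus i)]
    · intro i; rw [← mask_length _ _ (hus i), ← hws, List.length_map]

theorem cut_exists (t : STerm S ar) (P : A → Prop) (w : List (A ⊕ B))
    (h : TC (Al.dsum Bl) t (Sum.elim P Bl.Root) w) :
    ∃ (s : STerm S ar) (u : List (STerm S ar)), u.length = s.arity ∧ s.graftList u = t ∧
      w.map Sum.isLeft = mask s u := by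
  induction t generalizing P w with
  | leaf =>
    simp only [TC] at h
    subst h
    exact ⟨.leaf, [.leaf], rfl, rfl, rfl⟩
  | node g c ih =>
    have h0 := h
    obtain ⟨x, ws, rfl, h1, h2, h3⟩ := h
    cases x with
    | inl a =>
      simp only [dsum_edge_inl] at h3
      choose cs us hus hg hm using fun i => ih i _ _ (h3 i)
      refine ⟨.node g cs, (List.ofFn us).flatten, ?_, ?_, ?_⟩
      · rw [length_flatten_ofFn, STerm.arity]
        exact Finset.sum_congr rfl fun i _ => hus i
      · rw [graft_node _ _ _ hus]; simp only [hg]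
      · rw [mask_node _ _ _ hus, List.map_cons, List.map_flatten, List.map_ofFn]
        congr 4
        funext i
        exact hm i
    | inr b =>
      refine ⟨.leaf, [.node g c], rfl, rfl, ?_⟩
      exact TC_false Al Bl (.node g c) Bl.Root _ ⟨Sum.inr b, ws, rfl, h1, h2, h3⟩

/-- Mask of a tuple of factorizations. -/
def fmask (c : List (STerm S ar × List (STerm S ar))) : List Bool :=
  c.flatMap fun p => mask p.1 p.2

/-- The factorization relation. -/
abbrev Fac (c : List (STerm S ar × List (STerm S ar))) (f : List (STerm S ar)) : Prop :=
  List.Forall₂ (fun p t => p.2.length = p.1.arity ∧ p.1.graftList p.2 = t) c f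

theorem dsum_root : (Al.dsum Bl).Root = Sum.elim Al.Root Bl.Root := rfl

theorem key_forest (c : List (STerm S ar × List (STerm S ar))) (f : List (STerm S ar))
    (hc : Fac c f) (w : List (A ⊕ B)) (hm : w.map Sum.isLeft = fmask c) :
    FC (Al.dsum Bl) f w ↔
      FC Al (c.map Prod.fst) (lefts w) ∧ FC Bl (c.flatMap Prod.snd) (rights w) := by
  induction hc generalizing w with
  | nil =>
    have : w = [] := by simpa [fmask] using hm
    subst this
    simp [FC]
  | @cons p t c f hp hc ih =>
    obtain ⟨hl, rfl⟩ := hp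
    simp only [fmask, List.flatMap_cons] at hm
    rw [List.map_eq_append_iff] at hm
    obtain ⟨w1, w2, rfl, h1, h2⟩ := hm
    rw [List.map_cons, List.flatMap_cons, lefts, rights, List.filterMap_append,
      List.filterMap_append, FC_cons, FC_cons, FC_append, ih w2 h2, dsum_root,
      key_term Al Bl _ _ _ _ hl h1]
    · tauto
    · exact (rights_length w1).trans (by rw [h1, mask_count_false _ _ hl])
    · exact (lefts_length w1).trans (by rw [h1, mask_count_true _ _ hl])
    · rw [← mask_length _ _ hl, ← h1, List.length_map]

theorem fcut_exists (f : List (STerm S ar)) (w : List (A ⊕ B)) (h : FC (Al.dsum Bl) f w) :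
    ∃ c, Fac c f ∧ w.map Sum.isLeft = fmask c := by
  induction f generalizing w with
  | nil =>
    simp only [FC] at h
    subst h
    exact ⟨[], .nil, rfl⟩
  | cons t r ih =>
    obtain ⟨w1, w2, rfl, h1, h2⟩ := h
    obtain ⟨c, hc, hm⟩ := ih _ h2
    obtain ⟨s, u, hl, hg, hm'⟩ := cut_exists Al Bl t _ w1 h1
    exact ⟨(s, u) :: c, .cons ⟨hl, hg⟩ hc, by
      rw [List.map_append, hm, hm']; simp [fmask]⟩

theorem fmask_unique (f : List (STerm S ar)) (c c' : List (STerm S ar × List (STerm S ar)))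
    (hc : Fac c f) (hc' : Fac c' f) (hm : fmask c = fmask c') : c = c' := by
  induction hc generalizing c' with
  | nil => cases hc'; rfl
  | @cons p t c f hp hc ih =>
    obtain ⟨hl, hg⟩ := hp
    cases hc' with
    | @cons p' _ c' _ hp' hc' =>
    obtain ⟨hl', hg'⟩ := hp'
    simp only [fmask, List.flatMap_cons] at hm
    obtain ⟨m1, m2⟩ := List.append_inj hm (by
      rw [mask_length _ _ hl, mask_length _ _ hl', hg, hg'])
    obtain ⟨e1, e2⟩ := mask_unique _ _ _ _ hl hl' (hg.trans hg'.symm) m1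
    rw [ih c' hc' m2, Prod.ext e1 e2]

theorem fmask_counts (f : List (STerm S ar)) (c : List (STerm S ar × List (STerm S ar)))
    (hc : Fac c f) : (fmask c).count true = forestDeg (c.map Prod.fst) ∧
      (fmask c).count false = forestDeg (c.flatMap Prod.snd) := by
  induction hc with
  | nil => simp [fmask, forestDeg]
  | @cons p t c f hp hc ih =>
    simp only [fmask, List.flatMap_cons, List.count_append, forestDeg_append] at *
    rw [ih.1, ih.2, mask_count_true _ _ hp.1, mask_count_false _ _ hp.1]
    simp [forestDeg]

end Terms

end AD

/-- the alphabet doubling property. For a reduced forest `f`, a word `w'` on `A`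
and a word `w''` on `B`, the number of words `w` on `A ⊕ B` whose `A`-subword is `w'`, whose
`B`-subword is `w''`, and which are `f`-compatible for the disjoint sum alphabet, equals the
number of factorizations `((s₁,ū₁),…,(s_k,ū_k))` of the entries of `f` such that
`w' ⊩^A rd(s₁…s_k)` and `w'' ⊩^B rd(u₁…u_k)`. -/
theorem alphabet_doubling {S : Type} {ar : S → ℕ} {A B : Type}
    (Al : ForestAlphabet S A) (Bl : ForestAlphabet S B)
    (f : List (STerm S ar)) (hf : IsReducedF f) (w' : List A) (w'' : List B) :
    Nat.card {w : List (A ⊕ B) //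
        w.filterMap Sum.getLeft? = w' ∧ w.filterMap Sum.getRight? = w'' ∧
        (Al.dsum Bl).Compat w f} =
    Nat.card {c : List (STerm S ar × List (STerm S ar)) //
        List.Forall₂ (fun p t => p.2.length = p.1.arity ∧ p.1.graftList p.2 = t) c f ∧
        Al.Compat w' ((rdF (c.map Prod.fst)).map Subtype.val) ∧
        Bl.Compat w'' ((rdF (c.flatMap Prod.snd)).map Subtype.val)} := by
  rw [Nat.card_congr (Equiv.subtypeEquivRight (q := fun w : List (A ⊕ B) =>
      AD.lefts w = w' ∧ AD.rights w = w'' ∧ AD.FC (Al.dsum Bl) f w)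
      (fun w => by rw [AD.Compat_iff _ _ _ hf])),
    Nat.card_congr (Equiv.subtypeEquivRight
      (q := fun c : List (STerm S ar × List (STerm S ar)) =>
      AD.Fac c f ∧ AD.FC Al (c.map Prod.fst) w' ∧ AD.FC Bl (c.flatMap Prod.snd) w'')
      (fun c => by rw [AD.Compat_rdF, AD.Compat_rdF]))]
  have H : ∀ w : {w : List (A ⊕ B) // AD.lefts w = w' ∧ AD.rights w = w'' ∧
      AD.FC (Al.dsum Bl) f w}, ∃ c : {c : List (STerm S ar × List (STerm S ar)) //
      AD.Fac c f ∧ AD.FC Al (c.map Prod.fst) w' ∧ AD.FC Bl (c.flatMap Prod.snd) w''},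
      w.1.map Sum.isLeft = AD.fmask c.1 := by
    rintro ⟨w, rfl, rfl, h⟩
    obtain ⟨c, hc, hm⟩ := AD.fcut_exists Al Bl f w h
    exact ⟨⟨c, hc, (AD.key_forest Al Bl c f hc w hm).1 h⟩, hm⟩
  choose F hF using H
  refine Nat.card_eq_of_bijective F ⟨?_, ?_⟩
  · intro w v hwv
    apply Subtype.ext
    apply AD.word_unique
    · rw [hF, hF, hwv]
    · rw [w.2.1, v.2.1]
    · rw [w.2.2.1, v.2.2.1]
  · rintro ⟨c, hc, h1, h2⟩
    obtain ⟨k1, k2⟩ := AD.fmask_counts f c hc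
    obtain ⟨w, hm, rfl, rfl⟩ := AD.word_exists (AD.fmask c) w' w''
      (by rw [k1, AD.FC_length _ _ _ h1]) (by rw [k2, AD.FC_length _ _ _ h2])
    refine ⟨⟨w, rfl, rfl, (AD.key_forest Al Bl c f hc w hm).2 ⟨h1, h2⟩⟩, ?_⟩
    apply Subtype.ext
    exact AD.fmask_unique f _ _ (F _).2.1 hc ((hF _).symm.trans hm)
end

section
/- Let S be a signature and 𝕂 a field of characteristic zero. For each reduced S-forest f, let φ_f : (𝔸_S)* → 𝕂 be the indicator function of the set {w ∈ (𝔸_S)* : w ⊩^{𝔸_S} f}. Then the family (φ_f), indexed by all reduced S-forests f, is linearly independent in the 𝕂-vector space of functions (𝔸_S)* → 𝕂; equivalently, the realization map r_{𝔸_S} sending E_f to φ_f is injective. -/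
open scoped BigOperators

section Helpers

variable {S : Type} {ar : S → ℕ}

/-- offset of the `i`-th block -/
theorem aux_getElem_flatten {α : Type} : ∀ (n : ℕ) (ws : Fin n → List α) (d : Fin n → ℕ)
    (_ : ∀ i, (ws i).length = d i) (i : Fin n) (p : ℕ) (a : α), (ws i)[p]? = some a →
    (List.ofFn ws).flatten[p + ∑ j : Fin n, if (j : ℕ) < (i : ℕ) then d j else 0]? = some a := by
  intro n
  induction n with
  | zero => intro ws d hd i; exact i.elim0
  | succ n ih =>
    intro ws d hd i p a h
    rw [List.ofFn_succ, List.flatten_cons, Fin.sum_univ_succ]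
    refine Fin.cases ?_ (fun k => ?_) i h
    · intro h
      have hp : p < (ws 0).length := (List.getElem?_eq_some_iff.1 h).1
      simp only [Fin.val_zero, not_lt_zero, if_false, Finset.sum_const_zero, add_zero]
      rw [List.getElem?_append_left hp]; exact h
    · intro h
      have := ih (fun j => ws j.succ) (fun j => d j.succ) (fun j => hd _) k p a h
      simp only [Fin.val_zero, Fin.val_succ, Nat.zero_lt_succ, if_true, Nat.add_lt_add_iff_right]
      rw [List.getElem?_append_right (by rw [hd]; omega), ← this, hd]
      congr 1
      omega

theorem aux_split {α : Type} : ∀ (n : ℕ) (d : Fin n → ℕ) (w : List α), w.length = ∑ i, d i →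
    ∃ ws : Fin n → List α, w = (List.ofFn ws).flatten ∧ ∀ i, (ws i).length = d i := by
  intro n
  induction n with
  | zero => intro d w h; refine ⟨fun _ => [], ?_, fun i => i.elim0⟩; simpa using h
  | succ n ih =>
    intro d w h
    rw [Fin.sum_univ_succ] at h
    obtain ⟨ws, h1, h2⟩ := ih (fun i => d i.succ) (w.drop (d 0)) (by simp [h])
    refine ⟨Fin.cons (w.take (d 0)) ws, ?_, ?_⟩
    · rw [List.ofFn_succ]; simp [← h1]
    · intro i
      refine Fin.cases ?_ (fun k => ?_) i
      · simp [h]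
      · simp [h2]

theorem aux_flatten_inj {α : Type} : ∀ (n : ℕ) (v w : Fin n → List α),
    (∀ i, (v i).length = (w i).length) → (List.ofFn v).flatten = (List.ofFn w).flatten →
    v = w := by
  intro n
  induction n with
  | zero => intro v w _ _; funext i; exact i.elim0
  | succ n ih =>
    intro v w hl h
    rw [List.ofFn_succ, List.ofFn_succ, List.flatten_cons, List.flatten_cons] at h
    obtain ⟨h1, h2⟩ := List.append_inj h (hl 0)
    have := ih _ _ (fun i => hl i.succ) h2
    funext i
    refine Fin.cases h1 (fun k => congrFun this k) i

theorem aux_append {α : Type} (P : α → Prop) : ∀ (l l' r r' : List α),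
    (∀ a ∈ l, P a) → (∀ a ∈ l', P a) → (∀ a, r[0]? = some a → ¬ P a) →
    (∀ a, r'[0]? = some a → ¬ P a) → l ++ r = l' ++ r' → l = l' ∧ r = r' := by
  intro l
  induction l with
  | nil =>
    intro l' r r' _ h2 h3 _ h
    cases l' with
    | nil => exact ⟨rfl, h⟩
    | cons b l' => exact absurd (h2 b (by simp)) (h3 b (by simp only [List.nil_append] at h; simp [h]))
  | cons a l ih =>
    intro l' r r' h1 h2 h3 h4 h
    cases l' with
    | nil => exact absurd (h1 a (by simp)) (h4 a (by simp only [List.nil_append] at h; simp [← h]))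
    | cons b l' =>
      simp only [List.cons_append, List.cons.injEq] at h
      obtain ⟨e1, e2⟩ := ih l' r r' (fun x hx => h1 x (by simp [hx])) (fun x hx => h2 x (by simp [hx]))
        h3 h4 h.2
      exact ⟨by rw [h.1, e1], e2⟩

theorem aux_flatten_sep {α : Type} : ∀ (n : ℕ) (P : Fin n → α → Prop) (v w : Fin n → List α),
    (∀ i j a, P i a → P j a → i = j) → (∀ i, ∀ a ∈ v i, P i a) → (∀ i, ∀ a ∈ w i, P i a) →
    (List.ofFn v).flatten = (List.ofFn w).flatten → v = w := by
  intro n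
  induction n with
  | zero => intro P v w _ _ _ _; funext i; exact i.elim0
  | succ n ih =>
    intro P v w hP hv hw h
    rw [List.ofFn_succ, List.ofFn_succ, List.flatten_cons, List.flatten_cons] at h
    have key : ∀ u : Fin (n+1) → List α, (∀ i, ∀ a ∈ u i, P i a) →
        ∀ a, ((List.ofFn fun i : Fin n => u i.succ).flatten)[0]? = some a → ¬ P 0 a := by
      intro u hu a ha h0
      have hm := List.mem_of_getElem? ha
      rw [List.mem_flatten] at hm
      obtain ⟨l, hl, hal⟩ := hm
      rw [List.mem_ofFn] at hl
      obtain ⟨i, rfl⟩ := hl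
      exact absurd (hP _ _ _ h0 (hu _ _ hal)) (Fin.succ_ne_zero i).symm
    obtain ⟨h1, h2⟩ := aux_append (P 0) _ _ _ _ (hv 0) (hw 0) (key v hv) (key w hw) h
    have := ih (fun i => P i.succ) _ _ (fun i j a hi hj => Fin.succ_injective _ (hP _ _ _ hi hj))
      (fun i => hv i.succ) (fun i => hw i.succ) h2
    funext i
    refine Fin.cases h1 (fun k => congrFun this k) i

theorem aux_decs_length (t : STerm S ar) : t.decs.length = t.degree := by
  induction t with
  | leaf => rfl
  | node g c ih =>
    simp [STerm.decs, STerm.degree, List.length_flatten, List.map_ofFn, List.sum_ofFn, ih, add_comm]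

/-- weak compatibility of a word with a term (no condition on the root) -/
def TCw (w : List (S × List ℕ)) (t : STerm S ar) : Prop :=
  w.map Prod.fst = t.decs ∧ ∀ p j q, (p, j, q) ∈ t.edges → ∀ a b, w[p]? = some a →
    w[q]? = some b → ∃ ℓ, b.2 = a.2 ++ j :: List.replicate ℓ 0

def TCs (w : List (S × List ℕ)) (t : STerm S ar) : Prop :=
  w.map Prod.fst = t.decs ∧ ∀ p j q, (p, j, q) ∈ t.edges → ∃ a b, w[p]? = some a ∧
    w[q]? = some b ∧ ∃ ℓ, b.2 = a.2 ++ j :: List.replicate ℓ 0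

theorem TCs.weak {w : List (S × List ℕ)} {t : STerm S ar} (h : TCs w t) : TCw w t := by
  refine ⟨h.1, fun p j q hm a b ha hb => ?_⟩
  obtain ⟨a', b', ha', hb', hl⟩ := h.2 p j q hm
  rw [ha] at ha'; rw [hb] at hb'
  cases ha'; cases hb'; exact hl

theorem TCw.length {w : List (S × List ℕ)} {t : STerm S ar} (h : TCw w t) :
    w.length = t.degree := by
  rw [← aux_decs_length, ← h.1, List.length_map]

theorem TCw.node {w : List (S × List ℕ)} {g : S} {c : Fin (ar g) → STerm S ar}
    (h : TCw w (STerm.node g c)) : ∃ (u : List ℕ) (ws : Fin (ar g) → List (S × List ℕ)),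
      w = (g, u) :: (List.ofFn ws).flatten ∧ ∀ i, TCw (ws i) (c i) ∧
        ∀ a, (ws i)[0]? = some a → ∃ ℓ, a.2 = u ++ ((i : ℕ) + 1) :: List.replicate ℓ 0 := by
  have hlen := h.length
  obtain ⟨hd, he⟩ := h
  cases w with
  | nil => simp [STerm.decs] at hd
  | cons x w =>
    obtain ⟨g', u⟩ := x
    simp only [STerm.decs, List.map_cons, List.cons.injEq] at hd
    obtain ⟨rfl, hd⟩ := hd
    simp only [List.length_cons, STerm.degree] at hlen
    obtain ⟨ws, rfl, hws⟩ := aux_split (ar g') (fun i => (c i).degree) w (by omega)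
    have hdec : (fun i => (ws i).map Prod.fst) = fun i => (c i).decs := by
      apply aux_flatten_inj
      · intro i; simp [hws, aux_decs_length]
      · rw [← hd, List.map_flatten, List.map_ofFn]; rfl
    have hget := aux_getElem_flatten (ar g') ws (fun i => (c i).degree) hws
    refine ⟨u, ws, rfl, fun i => ⟨⟨congrFun hdec i, ?_⟩, ?_⟩⟩
    · intro p j q hm a b ha hb
      refine he (p + (1 + ∑ j : Fin (ar g'), if (j : ℕ) < (i : ℕ) then (c j).degree else 0)) j
        (q + (1 + ∑ j : Fin (ar g'), if (j : ℕ) < (i : ℕ) then (c j).degree else 0)) ?_ a b ?_ ?_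
      · rw [STerm.edges, List.mem_flatten]
        refine ⟨_, List.mem_ofFn.2 ⟨i, rfl⟩, ?_⟩
        rw [List.mem_append]
        right
        rw [List.mem_map]
        exact ⟨_, hm, rfl⟩
      · rw [← hget i p a ha, add_left_comm, add_comm 1, List.getElem?_cons_succ]
      · rw [← hget i q b hb, add_left_comm, add_comm 1, List.getElem?_cons_succ]
    · intro a ha
      refine he 0 ((i : ℕ) + 1)
        (1 + ∑ j : Fin (ar g'), if (j : ℕ) < (i : ℕ) then (c j).degree else 0) ?_ (g', u) a rfl ?_
      · rw [STerm.edges, List.mem_flatten]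
        refine ⟨_, List.mem_ofFn.2 ⟨i, rfl⟩, ?_⟩
        rw [List.mem_append]
        left
        have hpos : 0 < (ws i).length := (List.getElem?_eq_some_iff.1 ha).1
        rw [hws] at hpos
        cases hc : c i with
        | leaf => rw [hc] at hpos; simp [STerm.degree] at hpos
        | node _ _ => simp
      · rw [← hget i 0 a ha, add_comm 1, List.getElem?_cons_succ, zero_add]

theorem TCw.leaf {w : List (S × List ℕ)} (h : TCw w (STerm.leaf : STerm S ar)) : w = [] := by
  have := h.1
  simpa [STerm.decs] using this

theorem TCw.allPref (t : STerm S ar) : ∀ (w : List (S × List ℕ)) (v : List ℕ), TCw w t →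
    (∀ a, w[0]? = some a → v <+: a.2) → ∀ a ∈ w, v <+: a.2 := by
  induction t with
  | leaf => intro w v h _ a ha; rw [h.leaf] at ha; simp at ha
  | node g c ih =>
    intro w v h h0 a ha
    obtain ⟨u, ws, rfl, hws⟩ := h.node
    have hu : v <+: u := h0 (g, u) rfl
    rcases List.mem_cons.1 ha with rfl | ha
    · exact hu
    · rw [List.mem_flatten] at ha
      obtain ⟨l, hl, hal⟩ := ha
      obtain ⟨i, rfl⟩ := List.mem_ofFn.1 hl
      refine ih i (ws i) v (hws i).1 ?_ a hal
      intro b hb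
      obtain ⟨ℓ, e⟩ := (hws i).2 b hb
      rw [e]
      exact hu.trans (List.prefix_append _ _)

/-- canonical word of a term -/
def canonT : STerm S ar → List ℕ → List (S × List ℕ)
  | STerm.leaf, _ => []
  | STerm.node g c, u =>
    (g, u) :: (List.ofFn fun i : Fin (ar g) => canonT (c i) (u ++ [(i : ℕ) + 1])).flatten

theorem canonT_head (t : STerm S ar) (u : List ℕ) (a) (h : (canonT t u)[0]? = some a) :
    a.2 = u := by
  cases t with
  | leaf => simp [canonT] at h
  | node g c => simp [canonT] at h; rw [← h]

theorem canonT_TCs (t : STerm S ar) : ∀ u, TCs (canonT t u) t := by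
  induction t with
  | leaf => intro u; exact ⟨rfl, by simp [STerm.edges]⟩
  | node g c ih =>
    intro u
    have hws : ∀ i, (canonT (c i) (u ++ [(i : ℕ) + 1])).length = (c i).degree :=
      fun i => (ih i _).weak.length
    have hget := aux_getElem_flatten (ar g) (fun i => canonT (c i) (u ++ [(i : ℕ) + 1]))
      (fun i => (c i).degree) hws
    refine ⟨?_, ?_⟩
    · simp only [canonT, STerm.decs, List.map_cons, List.map_flatten, List.map_ofFn]
      congr 3
      funext i
      exact (ih i _).1
    · intro p j q hm
      rw [STerm.edges, List.mem_flatten] at hm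
      obtain ⟨l, hl, hm⟩ := hm
      obtain ⟨i, rfl⟩ := List.mem_ofFn.1 hl
      rw [List.mem_append] at hm
      rcases hm with hm | hm
      · cases hc : c i with
        | leaf => simp [hc] at hm
        | node g' c' =>
          simp only [hc, List.mem_singleton, Prod.mk.injEq] at hm
          obtain ⟨rfl, rfl, rfl⟩ := hm
          refine ⟨(g, u), (g', u ++ [(i : ℕ) + 1]), rfl, ?_, 0, by simp⟩
          rw [canonT, add_comm 1, List.getElem?_cons_succ]
          have := hget i 0 (g', u ++ [(i : ℕ) + 1]) (by simp [hc, canonT])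
          rwa [zero_add] at this
      · rw [List.mem_map] at hm
        obtain ⟨⟨p', j', q'⟩, hm, e⟩ := hm
        simp only [Prod.mk.injEq] at e
        obtain ⟨rfl, rfl, rfl⟩ := e
        obtain ⟨a, b, ha, hb, hl⟩ := (ih i (u ++ [(i : ℕ) + 1])).2 _ _ _ hm
        refine ⟨a, b, ?_, ?_, hl⟩
        · rw [← hget i _ a ha, canonT, add_left_comm, add_comm 1, List.getElem?_cons_succ]
        · rw [← hget i _ b hb, canonT, add_left_comm, add_comm 1, List.getElem?_cons_succ]

theorem canonT_allPref (t : STerm S ar) (u : List ℕ) : ∀ a ∈ canonT t u, u <+: a.2 :=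
  TCw.allPref t _ u (canonT_TCs t u).weak fun a ha => by rw [canonT_head t u a ha]

theorem aux_prefix_inj (u v : List ℕ) (i j : ℕ) (h1 : u ++ [i + 1] <+: v)
    (h2 : u ++ [j + 1] <+: v) : i = j := by
  have := (List.prefix_of_prefix_length_le h1 h2 (by simp)).eq_of_length (by simp)
  simpa using this

theorem canonT_unique (t : STerm S ar) : ∀ (t' : STerm S ar) (u : List ℕ),
    TCw (canonT t u) t' → t' = t := by
  induction t with
  | leaf =>
    intro t' u h
    cases t' with
    | leaf => rfl
    | node g' c' => obtain ⟨u, ws, e, _⟩ := h.node; simp [canonT] at e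
  | node g c ih =>
    intro t' u h
    cases t' with
    | leaf => have := h.leaf; simp [canonT] at this
    | node g' c' =>
      obtain ⟨u', ws, e, hws⟩ := h.node
      simp only [canonT, List.cons.injEq, Prod.mk.injEq] at e
      obtain ⟨⟨rfl, rfl⟩, e⟩ := e
      have key := aux_flatten_sep (ar g) (fun i a => u ++ [(i : ℕ) + 1] <+: a.2) _ _
        (fun i j a h1 h2 => Fin.ext (aux_prefix_inj u a.2 i j h1 h2))
        (fun i => canonT_allPref (c i) (u ++ [(i : ℕ) + 1]))
        (fun i => TCw.allPref (c' i) (ws i) _ (hws i).1 (fun a ha => by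
          obtain ⟨ℓ, e⟩ := (hws i).2 a ha
          rw [e]; exact ⟨List.replicate ℓ 0, by simp⟩)) e
      have : c' = c := by
        funext i
        refine ih i _ (u ++ [(i : ℕ) + 1]) ?_
        have h2 := congrFun key i
        rw [h2]; exact (hws i).1
      rw [this]

theorem TCw.tail {t : STerm S ar} {x : S × List ℕ} {w : List (S × List ℕ)}
    (h : TCw (x :: w) t) : ∀ a ∈ w, ¬ ∃ ℓ, a.2 = List.replicate ℓ 0 := by
  cases t with
  | leaf => have := h.leaf; simp at this
  | node g c =>
    obtain ⟨u, ws, e, hws⟩ := h.node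
    simp only [List.cons.injEq] at e
    obtain ⟨rfl, rfl⟩ := e
    intro a ha
    rw [List.mem_flatten] at ha
    obtain ⟨l, hl, hal⟩ := ha
    obtain ⟨i, rfl⟩ := List.mem_ofFn.1 hl
    have hp := TCw.allPref (c i) (ws i) (u ++ [(i : ℕ) + 1]) (hws i).1 (fun a ha => by
          obtain ⟨ℓ, e⟩ := (hws i).2 a ha
          rw [e]; exact ⟨List.replicate ℓ 0, by simp⟩) a hal
    rintro ⟨ℓ, e⟩
    rw [e] at hp
    have : (i : ℕ) + 1 ∈ List.replicate ℓ 0 := hp.subset (by simp)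
    have := List.eq_of_mem_replicate this
    omega

theorem compat_cons {w : List (S × List ℕ)} {t : STerm S ar} {f : List (STerm S ar)}
    (ht : t ≠ STerm.leaf)
    (h : (ASAlphabet S).Compat w (t :: f)) : ∃ x w1 w2, w = (x :: w1) ++ w2 ∧ TCw (x :: w1) t ∧
      (∃ ℓ, x.2 = List.replicate ℓ 0) ∧ (ASAlphabet S).Compat w2 f := by
  obtain ⟨hl, hr, hd, he⟩ := h
  have hl' : w.length = t.degree + forestDeg f := by simpa [forestDeg] using hl
  have hdeg : (forestDecs f).length = forestDeg f := by
    simp [forestDecs, forestDeg, List.length_flatten, Function.comp_def, aux_decs_length]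
  have hdl : (forestDecs (t :: f)) = t.decs ++ forestDecs f := by simp [forestDecs]
  have hmap : w.map Prod.fst = forestDecs (t :: f) := by
    apply List.ext_getElem
    · rw [hdl, List.length_append, hdeg, List.length_map, aux_decs_length, hl']
    · intro i h1 h2
      have := hd i (by simpa using h1) h2
      simpa [ASAlphabet] using this
  have hpos : 0 < t.degree := by
    cases t with
    | leaf => exact absurd rfl ht
    | node g c => simp [STerm.degree]
  obtain ⟨w1, w2, rfl, hw1⟩ : ∃ w1 w2, w = w1 ++ w2 ∧ w1.length = t.degree :=
    ⟨w.take t.degree, w.drop t.degree, by simp, by simp [hl']⟩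
  rw [hdl, List.map_append] at hmap
  obtain ⟨hm1, hm2⟩ := List.append_inj hmap (by simp [hw1, aux_decs_length])
  cases w1 with
  | nil => simp at hw1; omega
  | cons x w1 =>
    refine ⟨x, w1, w2, rfl, ⟨hm1, ?_⟩, ?_, ?_, ?_, ?_, ?_⟩
    · intro p j q hm a b ha hb
      obtain ⟨hp, rfl⟩ := List.getElem?_eq_some_iff.1 ha
      obtain ⟨hq, rfl⟩ := List.getElem?_eq_some_iff.1 hb
      have := he p j q (by rw [forestEdges, List.mem_append]; exact Or.inl hm)
        (by rw [List.length_append]; omega) (by rw [List.length_append]; omega)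
      simp only [List.get_eq_getElem] at this
      rw [List.getElem_append_left hp, List.getElem_append_left hq] at this
      exact this
    · exact hr 0 (by simp) (by simp [rootIdxs])
    · rw [List.length_append] at hl'; omega
    · intro i hi hm
      have := hr (i + t.degree) (by rw [List.length_append]; omega)
        (by rw [rootIdxs]; exact List.mem_cons_of_mem _ (List.mem_map.2 ⟨i, hm, rfl⟩))
      simp only [List.get_eq_getElem] at this ⊢
      rw [List.getElem_append_right (by omega)] at this
      simpa only [hw1, Nat.add_sub_cancel] using this
    · intro i hi hdd
      simp only [List.get_eq_getElem, ← hm2, List.getElem_map]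
      rfl
    · intro p j q hm hp hq
      have := he (p + t.degree) j (q + t.degree)
        (by rw [forestEdges, List.mem_append]; exact Or.inr (List.mem_map.2 ⟨_, hm, rfl⟩))
        (by rw [List.length_append]; omega) (by rw [List.length_append]; omega)
      simp only [List.get_eq_getElem] at this ⊢
      rw [List.getElem_append_right (by omega), List.getElem_append_right (by omega)] at this
      simpa only [hw1, Nat.add_sub_cancel] using this

def canonF (f : List (STerm S ar)) : List (S × List ℕ) := (f.map fun t => canonT t []).flatten

theorem canonF_cons (t : STerm S ar) (f : List (STerm S ar)) :
    canonF (t :: f) = canonT t [] ++ canonF f := by simp [canonF]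

theorem canonF_compat (f : List (STerm S ar)) (hf : IsReducedF f) :
    (ASAlphabet S).Compat (canonF f) f := by
  have hdec : ∀ f : List (STerm S ar), (canonF f).map Prod.fst = forestDecs f := by
    intro f
    simp only [canonF, forestDecs, List.map_flatten, List.map_map]
    congr 2
    funext t
    exact (canonT_TCs t []).1
  have hlen : ∀ f : List (STerm S ar), (canonF f).length = forestDeg f := by
    intro f
    rw [← List.length_map (f := Prod.fst), hdec]
    simp [forestDecs, forestDeg, List.length_flatten, Function.comp_def, aux_decs_length]
  have main : (∀ i ∈ rootIdxs f, ∃ a, (canonF f)[i]? = some a ∧ a.2 = []) ∧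
      ∀ p j q, (p, j, q) ∈ forestEdges f → ∃ a b, (canonF f)[p]? = some a ∧
        (canonF f)[q]? = some b ∧ ∃ ℓ, b.2 = a.2 ++ j :: List.replicate ℓ 0 := by
    induction f with
    | nil => simp [rootIdxs, forestEdges]
    | cons t f ih =>
      obtain ⟨ih1, ih2⟩ := ih (fun s hs => hf s (List.mem_cons_of_mem _ hs))
      have hL : (canonT t []).length = t.degree := (canonT_TCs t []).weak.length
      have hR : ∀ i : ℕ, (canonF (t :: f))[i + t.degree]? = (canonF f)[i]? := by
        intro i
        rw [canonF_cons, List.getElem?_append_right (by omega), hL, Nat.add_sub_cancel]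
      have hLe : ∀ (i : ℕ) (a : S × List ℕ), (canonT t [])[i]? = some a → (canonF (t :: f))[i]? = some a := by
        intro i a h
        rw [canonF_cons, List.getElem?_append_left (List.getElem?_eq_some_iff.1 h).1, h]
      refine ⟨?_, ?_⟩
      · intro i hi
        rw [rootIdxs, List.mem_cons, List.mem_map] at hi
        rcases hi with rfl | ⟨i, hi, rfl⟩
        · cases t with
          | leaf => exact absurd rfl (hf _ (List.mem_cons_self))
          | node g c => exact ⟨(g, []), hLe _ _ (by simp [canonT]), rfl⟩
        · simp only [hR]; exact ih1 i hi
      · intro p j q hm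
        rw [forestEdges, List.mem_append, List.mem_map] at hm
        rcases hm with hm | ⟨⟨p', j', q'⟩, hm, e⟩
        · obtain ⟨a, b, ha, hb, h⟩ := (canonT_TCs t []).2 p j q hm
          exact ⟨a, b, hLe _ _ ha, hLe _ _ hb, h⟩
        · simp only [Prod.mk.injEq] at e
          obtain ⟨rfl, rfl, rfl⟩ := e
          simp only [hR]; exact ih2 _ _ _ hm
  refine ⟨hlen f, ?_, ?_, ?_⟩
  · intro i hi hm
    obtain ⟨a, ha, e⟩ := main.1 i hm
    obtain ⟨_, rfl⟩ := List.getElem?_eq_some_iff.1 ha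
    exact ⟨0, by simpa using e⟩
  · intro i hi hd
    simp only [List.get_eq_getElem, ← hdec, List.getElem_map]
    rfl
  · intro p j q hm hp hq
    obtain ⟨a, b, ha, hb, h⟩ := main.2 p j q hm
    obtain ⟨_, rfl⟩ := List.getElem?_eq_some_iff.1 ha
    obtain ⟨_, rfl⟩ := List.getElem?_eq_some_iff.1 hb
    exact h

theorem compat_head {w : List (S × List ℕ)} {f : List (STerm S ar)} (hf : IsReducedF f)
    (h : (ASAlphabet S).Compat w f) : ∀ a, w[0]? = some a →
      ¬ ¬ ∃ ℓ, a.2 = List.replicate ℓ 0 := by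
  intro a ha
  rw [not_not]
  cases f with
  | nil => have := h.1; simp [forestDeg] at this; simp [this] at ha
  | cons t f =>
    obtain ⟨hp, rfl⟩ := List.getElem?_eq_some_iff.1 ha
    exact h.2.1 0 hp (by simp [rootIdxs])

theorem canonF_unique (f : List (STerm S ar)) : ∀ (f' : List (STerm S ar)), IsReducedF f →
    IsReducedF f' → (ASAlphabet S).Compat (canonF f) f' → f' = f := by
  induction f with
  | nil =>
    intro f' _ hf' h
    cases f' with
    | nil => rfl
    | cons t' f' =>
      obtain ⟨x, w1, w2, e, _⟩ := compat_cons (hf' t' (by simp)) h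
      simp [canonF] at e
  | cons t f ih =>
    intro f' hf hf' h
    have hfr : IsReducedF f := fun s hs => hf s (List.mem_cons_of_mem _ hs)
    have hc := canonF_compat f hfr
    cases t with
    | leaf => exact absurd rfl (hf _ (by simp))
    | node g c =>
    cases f' with
    | nil => have := h.1; simp [canonF, canonT, forestDeg] at this
    | cons t' f' =>
      have hfr' : IsReducedF f' := fun s hs => hf' s (List.mem_cons_of_mem _ hs)
      obtain ⟨x, w1, w2, e, h1, h2, h3⟩ := compat_cons (hf' t' (by simp)) h
      have hT := (canonT_TCs (STerm.node g c) []).weak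
      have hu := canonT_unique (STerm.node g c) t' []
      rw [canonF_cons] at e
      rw [canonT] at e hT hu
      simp only [List.cons_append, List.cons.injEq] at e
      obtain ⟨rfl, e⟩ := e
      obtain ⟨e1, e2⟩ := aux_append (fun a => ¬ ∃ ℓ, a.2 = List.replicate ℓ 0) _ _ _ _ hT.tail
        h1.tail (compat_head hfr hc) (compat_head hfr' h3) e
      rw [e1] at hu
      rw [hu h1, ih f' hfr hfr' (by rw [e2]; exact h3)]

end Helpers

/-- the indicator functions of the compatibility sets
`{w ∈ (𝔸_S)* : w ⊩^{𝔸_S} f}`, indexed by the reduced `S`-forests `f`, are linearly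
independent; equivalently, the realization map `r_{𝔸_S}` is injective. -/
theorem realization_AS_injective {S : Type} {ar : S → ℕ}
    (𝕂 : Type) [Field 𝕂] [CharZero 𝕂] :
    LinearIndependent 𝕂
      (fun f : {f : List (STerm S ar) // IsReducedF f} =>
        Set.indicator {w : List (S × List ℕ) | (ASAlphabet S).Compat w f.val}
          (fun _ => (1 : 𝕂))) := by
  classical
  rw [linearIndependent_iff']
  intro s c hc f hf
  have h := congrFun hc (canonF f.val)
  simp only [Finset.sum_apply, Pi.smul_apply, Pi.zero_apply, smul_eq_mul] at h
  rw [Finset.sum_eq_single f] at h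
  · rwa [Set.indicator_of_mem (by exact canonF_compat f.val f.2), mul_one] at h
  · intro f' _ hne
    rw [Set.indicator_of_notMem, mul_zero]
    intro hm
    exact hne (Subtype.ext (canonF_unique f.val f'.val f.2 f'.2 hm))
  · intro hn; exact absurd hf hn
end

section
/- Let S be a positive signature and let ≡ be the smallest equivalence relation on S-terms that contains the pairs (ι(g) ∘_i ι(g'), ι(g') ∘_{i'} ι(g)) for all g, g' ∈ S, i ∈ {1,…,ar(g)}, i' ∈ {1,…,ar(g')}, and that is an operad congruence. Then two S-terms t and t' satisfy t ≡ t' if and only if the multiset of decorations of the internal nodes of t equals the multiset of decorations of the internal nodes of t'. In particular, the elements of arity n of the quotient operad MAs_S are in bijection with the multisets {g_1,…,g_ℓ} over S satisfying ar(g_1) + ⋯ + ar(g_ℓ) − ℓ + 1 = n, and under this bijection the operadic composition corresponds to multiset union. -/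
open scoped BigOperators

/-- The partial composition `t ∘_i s` (0-based `i`): grafting `s` at the `i`-th leaf only. -/
def graftAt {S : Type} {ar : S → ℕ} (t : STerm S ar) (i : ℕ) (s : STerm S ar) : STerm S ar :=
  t.graftList ((List.replicate t.arity STerm.leaf).set i s)

/-- The smallest equivalence relation on `S`-terms containing the pairs
`(ι(g) ∘_i ι(g'), ι(g') ∘_{i'} ι(g))` and which is an operad congruence. -/
inductive MasRel {S : Type} {ar : S → ℕ} : STerm S ar → STerm S ar → Prop
  | gen (g g' : S) (i : Fin (ar g)) (i' : Fin (ar g')) :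
      MasRel (graftAt (iotaT g) (i : ℕ) (iotaT g')) (graftAt (iotaT g') (i' : ℕ) (iotaT g))
  | refl (t : STerm S ar) : MasRel t t
  | symm {t t' : STerm S ar} : MasRel t t' → MasRel t' t
  | trans {t t' t'' : STerm S ar} : MasRel t t' → MasRel t' t'' → MasRel t t''
  | congr (t t' : STerm S ar) (l l' : List (STerm S ar)) :
      MasRel t t' → t.arity = t'.arity → l.length = t.arity → l'.length = t'.arity →
      List.Forall₂ MasRel l l' → MasRel (t.graftList l) (t'.graftList l')


section Aux

variable {S : Type} {ar : S → ℕ}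

/-- Multiset of decorations. -/
def mdecs (t : STerm S ar) : Multiset S := (t.decs : Multiset S)

theorem mdecs_leaf : mdecs (STerm.leaf : STerm S ar) = 0 := rfl

theorem coe_flatten_ofFn (n : ℕ) (f : Fin n → List S) :
    (((List.ofFn f).flatten : List S) : Multiset S) = ∑ i, (f i : Multiset S) := by
  induction n with
  | zero => simp
  | succ n ih =>
    rw [List.ofFn_succ, List.flatten_cons, ← Multiset.coe_add, ih, Fin.sum_univ_succ]

theorem mdecs_node (g : S) (c : Fin (ar g) → STerm S ar) :
    mdecs (STerm.node g c) = g ::ₘ ∑ i, mdecs (c i) := by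
  unfold mdecs
  rw [STerm.decs, ← Multiset.cons_coe, coe_flatten_ofFn]

theorem sum_blocks {M : Type} [AddCommMonoid M] {A : Type} (F : A → M) (l : List A) (n : ℕ)
    (a : Fin n → ℕ) :
    ∑ i : Fin n, (((l.drop (∑ j : Fin n, if (j : ℕ) < (i : ℕ) then a j else 0)).take
      (a i)).map F).sum = ((l.take (∑ j, a j)).map F).sum := by
  induction n with
  | zero => simp
  | succ n ih =>
    rw [Fin.sum_univ_castSucc]
    have h1 : ∀ i : Fin n, (∑ j : Fin (n+1), if (j : ℕ) < ((i.castSucc : Fin (n+1)) : ℕ) then a j else 0)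
        = ∑ j : Fin n, if (j : ℕ) < (i : ℕ) then a j.castSucc else 0 := by
      intro i
      rw [Fin.sum_univ_castSucc]
      simp [Nat.not_lt.mpr i.2.le]
    have h2 : (∑ j : Fin (n+1), if (j : ℕ) < ((Fin.last n : Fin (n+1)) : ℕ) then a j else 0)
        = ∑ j : Fin n, a j.castSucc := by
      rw [Fin.sum_univ_castSucc]
      simp
    simp only [h1, h2]
    rw [ih (fun j => a j.castSucc), Fin.sum_univ_castSucc, List.take_add, List.map_append,
      List.sum_append]

theorem mdecs_graftList (t : STerm S ar) : ∀ l : List (STerm S ar), l.length ≤ t.arity →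
    mdecs (t.graftList l) = mdecs t + (l.map mdecs).sum := by
  induction t with
  | leaf =>
    intro l hl
    rw [STerm.graftList, mdecs_leaf]
    match l, hl with
    | [], _ => simp [mdecs_leaf]
    | [x], _ => simp
    | x :: y :: r, h => simp [STerm.arity] at h
  | node g c ih =>
    intro l hl
    rw [STerm.graftList, mdecs_node, mdecs_node]
    rw [Finset.sum_congr rfl (fun i _ => ih i _ (List.length_take_le _ _)), Finset.sum_add_distrib,
      sum_blocks mdecs l (ar g) (fun i => (c i).arity), List.take_of_length_le, Multiset.cons_add]
    rw [STerm.arity] at hl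
    exact hl

theorem mdecs_graftAt (t s : STerm S ar) (i : ℕ) (hi : i < t.arity) :
    mdecs (graftAt t i s) = mdecs t + mdecs s := by
  unfold graftAt
  rw [mdecs_graftList _ _ (by simp), List.set_eq_take_append_cons_drop]
  simp [hi, mdecs_leaf]

theorem arity_iotaT (g : S) : (iotaT g : STerm S ar).arity = ar g := by
  simp [iotaT, STerm.arity]

theorem mdecs_iotaT (g : S) : mdecs (iotaT g : STerm S ar) = {g} := by
  simp [iotaT, mdecs_node, mdecs_leaf]

theorem arity_eq (t : STerm S ar) :
    ((mdecs t).map ar).sum + 1 = Multiset.card (mdecs t) + t.arity := by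
  induction t with
  | leaf => simp [mdecs_leaf, STerm.arity]
  | node g c ih =>
    rw [mdecs_node, STerm.arity, Multiset.map_cons, Multiset.sum_cons, Multiset.card_cons]
    have h := Finset.sum_congr (rfl : (Finset.univ : Finset (Fin (ar g))) = _) (fun i _ => ih i)
    rw [Finset.sum_add_distrib, Finset.sum_add_distrib] at h
    have e1 : ((∑ i, mdecs (c i)).map ar).sum = ∑ i, ((mdecs (c i)).map ar).sum := by
      have := map_sum (Multiset.sumAddMonoidHom.comp (Multiset.mapAddMonoidHom ar))
        (fun i => mdecs (c i)) Finset.univ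
      exact this
    have e2 : Multiset.card (∑ i, mdecs (c i)) = ∑ i, Multiset.card (mdecs (c i)) := by
      simp
    rw [e1, e2]
    simp at h
    omega

theorem masRel_sound {t t' : STerm S ar} (h : MasRel t t') : mdecs t = mdecs t' := by
  refine MasRel.rec (motive_1 := fun t t' _ => mdecs t = mdecs t')
    (motive_2 := fun l l' _ => (l.map mdecs).sum = (l'.map mdecs).sum)
    ?_ ?_ ?_ ?_ ?_ ?_ ?_ h
  · intro g g' i i'
    rw [mdecs_graftAt _ _ _ (by rw [arity_iotaT]; exact i.2),
      mdecs_graftAt _ _ _ (by rw [arity_iotaT]; exact i'.2), add_comm]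
  · intro t; rfl
  · intro t t' _ h; exact h.symm
  · intro t t' t'' _ _ h h'; exact h.trans h'
  · intro t t' l l' _ _ hl hl' _ h1 h2
    rw [mdecs_graftList _ _ hl.le, mdecs_graftList _ _ hl'.le, h1, h2]
  · rfl
  · intro a b l l' _ _ h1 h2
    simp [h1, h2]

theorem forall₂_refl (l : List (STerm S ar)) : List.Forall₂ MasRel l l :=
  List.forall₂_same.mpr fun x _ => MasRel.refl x

theorem sum_lt_one (n : ℕ) (i : ℕ) (hi : i ≤ n) :
    (∑ j : Fin n, if (j : ℕ) < i then 1 else 0) = i := by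
  rw [Fin.sum_univ_eq_sum_range (fun j => if j < i then 1 else 0) n, ← Finset.sum_filter]
  have : (Finset.range n).filter (fun j => j < i) = Finset.range i := by
    ext x; simp; omega
  rw [this]; simp

theorem headD_take_drop (l : List (STerm S ar)) (k : ℕ) :
    ((l.drop k).take 1).headD STerm.leaf = l.getD k STerm.leaf := by
  rw [List.headD_eq_head?_getD, List.getD_eq_getElem?_getD]
  simp [List.head?_take, List.head?_drop]

theorem graftList_iotaT (g : S) (l : List (STerm S ar)) :
    (iotaT g : STerm S ar).graftList l = STerm.node g fun i => l.getD i STerm.leaf := by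
  unfold iotaT
  rw [STerm.graftList]
  congr 1
  funext i
  simp only [STerm.arity, STerm.graftList]
  rw [headD_take_drop, sum_lt_one _ _ i.2.le]

theorem node_congr (g : S) (c c' : Fin (ar g) → STerm S ar) (h : ∀ i, MasRel (c i) (c' i)) :
    MasRel (STerm.node g c) (STerm.node g c') := by
  have key : ∀ c : Fin (ar g) → STerm S ar,
      STerm.node g c = (iotaT g : STerm S ar).graftList (List.ofFn c) := by
    intro c
    rw [graftList_iotaT]
    congr 1
    funext i
    simp [List.getD_eq_getElem?_getD]
  rw [key c, key c']
  refine MasRel.congr _ _ _ _ (MasRel.refl _) rfl (by simp [arity_iotaT]) (by simp [arity_iotaT]) ?_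
  rw [List.forall₂_iff_get]
  refine ⟨by simp, ?_⟩
  intro i h1 h2
  simpa using h _

theorem graftAt_iotaT (g h : S) (i : ℕ) :
    graftAt (iotaT g) i (iotaT h) =
      (STerm.node g fun j => if (j : ℕ) = i then iotaT h else STerm.leaf : STerm S ar) := by
  unfold graftAt
  rw [graftList_iotaT, arity_iotaT]
  congr 1
  funext j
  rw [List.getD_eq_getElem?_getD, List.getElem?_set]
  have := j.2
  by_cases e : (j : ℕ) = i
  · subst e; simp
  · simp [e, Ne.symm e, List.getElem?_replicate]

/-- The two-level term with root `g`, `h` as its `i`-th child, leaves filled by `f`. -/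
def twoLev (g h : S) (i : ℕ) (f : ℕ → STerm S ar) : STerm S ar :=
  STerm.node g fun j =>
    if (j : ℕ) < i then f j
    else if (j : ℕ) = i then STerm.node h fun k => f (i + k)
    else f (j + ar h - 1)

theorem sum_off (g h : S) (i : ℕ) (n : ℕ) (hi : i < ar g) (hn : n ≤ ar g) :
    (∑ j : Fin (ar g), if (j : ℕ) < n then
      (if (j : ℕ) = i then (iotaT h : STerm S ar) else STerm.leaf).arity else 0) + (if i < n then 1 else 0) =
      n + (if i < n then ar h else 0) := by
  have e : ∀ j : Fin (ar g), (if (j : ℕ) < n then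
      (if (j : ℕ) = i then (iotaT h : STerm S ar) else STerm.leaf).arity else 0)
      + (if (j : ℕ) = i then (if i < n then 1 else 0) else 0)
      = (if (j : ℕ) < n then 1 else 0) + (if (j : ℕ) = i then (if i < n then ar h else 0) else 0) := by
    intro j
    by_cases h1 : (j : ℕ) = i
    · subst h1
      by_cases h2 : (j : ℕ) < n
      · simp [h2, arity_iotaT, add_comm]
      · simp [h2]
    · simp [h1, STerm.arity]
  have e2 : ∀ a : ℕ, (∑ j : Fin (ar g), if (j : ℕ) = i then a else 0) = a := by
    intro a
    rw [Finset.sum_eq_single (⟨i, hi⟩ : Fin (ar g))]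
    · simp
    · intro b _ hb
      rw [if_neg]
      intro hh; exact hb (Fin.ext hh)
    · simp
  have := Finset.sum_congr (rfl : (Finset.univ : Finset (Fin (ar g))) = _) (fun j _ => e j)
  rw [Finset.sum_add_distrib, Finset.sum_add_distrib, e2, e2, sum_lt_one _ _ hn] at this
  exact this

theorem arity_two (g h : S) (i : ℕ) (hi : i < ar g) :
    (graftAt (iotaT g) i (iotaT h) : STerm S ar).arity = ar g + ar h - 1 := by
  have := arity_eq (graftAt (iotaT g) i (iotaT h) : STerm S ar)
  rw [mdecs_graftAt _ _ _ (by rwa [arity_iotaT]), mdecs_iotaT, mdecs_iotaT] at this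
  simp at this
  omega

theorem twoLev_eq (g h : S) (i : ℕ) (hi : i < ar g) (f : ℕ → STerm S ar) (hh : 0 < ar h) :
    twoLev g h i f = (graftAt (iotaT g) i (iotaT h) : STerm S ar).graftList
      ((List.range (ar g + ar h - 1)).map f) := by
  have hget : ∀ k, k < ar g + ar h - 1 →
      ((List.range (ar g + ar h - 1)).map f).getD k STerm.leaf = f k := by
    intro k hk
    rw [List.getD_eq_getElem?_getD]
    simp [hk]
  rw [graftAt_iotaT, STerm.graftList]
  unfold twoLev
  congr 1
  funext j
  have hj := j.2
  have ho := sum_off (ar := ar) g h i j hi hj.le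
  generalize (∑ j_1 : Fin (ar g), if (j_1 : ℕ) < (j : ℕ) then
      (if (j_1 : ℕ) = i then (iotaT h : STerm S ar) else STerm.leaf).arity else 0) = o at ho ⊢
  rcases lt_trichotomy (j : ℕ) i with h1 | h1 | h1
  · have h2 : ¬ i < (j : ℕ) := by omega
    have h3 : (j : ℕ) ≠ i := by omega
    simp only [h1, h2, h3, if_true, if_false] at ho ⊢
    rw [STerm.graftList, STerm.arity, headD_take_drop, hget _ (by omega)]
    congr 1; omega
  · have h2 : ¬ i < (j : ℕ) := by omega
    have h3 : ¬ (j : ℕ) < i := by omega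
    simp only [h1, lt_irrefl, if_true, if_false] at ho ⊢
    rw [graftList_iotaT, arity_iotaT]
    congr 1
    funext k
    have hk := k.2
    have : o = i := by omega
    subst this
    rw [← hget (o + k) (by omega), List.getD_eq_getElem?_getD, List.getD_eq_getElem?_getD,
      List.getElem?_take_of_lt hk, List.getElem?_drop]
  · have h2 : ¬ (j : ℕ) < i := by omega
    have h3 : (j : ℕ) ≠ i := by omega
    simp only [h1, h2, h3, if_true, if_false] at ho ⊢
    rw [STerm.graftList, STerm.arity, headD_take_drop, hget _ (by omega)]
    congr 1; omega

theorem rot (hpos : ∀ g : S, 0 < ar g) (g h : S) (i i' : ℕ) (hi : i < ar g) (hi' : i' < ar h)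
    (f : ℕ → STerm S ar) : MasRel (twoLev g h i f) (twoLev h g i' f) := by
  rw [twoLev_eq g h i hi f (hpos h), twoLev_eq h g i' hi' f (hpos g), add_comm (ar h) (ar g)]
  have e1 := arity_two (ar := ar) g h i hi
  have e2 := arity_two (ar := ar) h g i' hi'
  refine MasRel.congr _ _ _ _ (MasRel.gen g h ⟨i, hi⟩ ⟨i', hi'⟩) ?_ ?_ ?_ (forall₂_refl _)
  · rw [e1, e2, add_comm]
  · rw [e1]; simp
  · rw [e2]; simp [add_comm]

/-- Left comb step. -/
def comb (g : S) (s : STerm S ar) : STerm S ar :=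
  STerm.node g fun j => if (j : ℕ) = 0 then s else STerm.leaf

/-- Left comb normal form. -/
def nf : List S → STerm S ar
  | [] => STerm.leaf
  | g :: w => comb g (nf w)

theorem mdecs_comb (hpos : ∀ g : S, 0 < ar g) (g : S) (s : STerm S ar) :
    mdecs (comb g s) = g ::ₘ mdecs s := by
  unfold comb
  rw [mdecs_node, Finset.sum_eq_single (⟨0, hpos g⟩ : Fin (ar g))]
  · simp
  · intro b _ hb
    rw [if_neg, mdecs_leaf]
    intro hh; exact hb (Fin.ext hh)
  · simp

theorem mdecs_nf (hpos : ∀ g : S, 0 < ar g) (w : List S) :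
    mdecs (nf w : STerm S ar) = (w : Multiset S) := by
  induction w with
  | nil => rfl
  | cons g w ih => rw [nf, mdecs_comb hpos, ih, Multiset.cons_coe]

theorem comb_congr (g : S) {s s' : STerm S ar} (h : MasRel s s') :
    MasRel (comb g s) (comb g s') := by
  unfold comb
  apply node_congr
  intro i
  split_ifs
  · exact h
  · exact MasRel.refl _

theorem comb_swap (hpos : ∀ g : S, 0 < ar g) (g h : S) (s : STerm S ar) :
    MasRel (comb g (comb h s)) (comb h (comb g s)) := by
  have key : ∀ g h : S, comb g (comb h s) =
      twoLev g h 0 (fun p => if p = 0 then s else STerm.leaf) := by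
    intro g h
    unfold comb twoLev
    congr 1
    funext j
    have := hpos h
    by_cases hj : (j : ℕ) = 0
    · simp [hj]
    · have : ¬ ((j : ℕ) + ar h - 1 = 0) := by omega
      simp [hj, this]
  rw [key, key]
  exact rot hpos g h 0 0 (hpos g) (hpos h) _

theorem nf_perm (hpos : ∀ g : S, 0 < ar g) {w w' : List S} (h : w.Perm w') :
    MasRel (nf w : STerm S ar) (nf w') := by
  induction h with
  | nil => exact MasRel.refl _
  | cons x _ ih => exact comb_congr x ih
  | swap x y l => exact comb_swap hpos y x _
  | trans _ _ h1 h2 => exact h1.trans h2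

theorem card_child_lt (g : S) (c : Fin (ar g) → STerm S ar) (i : Fin (ar g)) :
    Multiset.card (mdecs (c i)) < Multiset.card (mdecs (STerm.node g c)) := by
  rw [mdecs_node, Multiset.card_cons, Multiset.card_sum]
  have := Finset.single_le_sum (f := fun i => Multiset.card (mdecs (c i)))
    (fun _ _ => Nat.zero_le _) (Finset.mem_univ i)
  omega

theorem exists_comb (hpos : ∀ g : S, 0 < ar g) (N : ℕ) : ∀ (k : ℕ) (g : S)
    (c : Fin (ar g) → STerm S ar), Multiset.card (mdecs (STerm.node g c)) = N →
    N ≤ Multiset.card (mdecs (c ⟨0, hpos g⟩)) + k →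
    ∃ s : STerm S ar, MasRel (STerm.node g c) (comb g s) := by
  intro k
  induction k with
  | zero =>
    intro g c h1 h2
    have := card_child_lt g c ⟨0, hpos g⟩
    omega
  | succ k ih =>
    intro g c h1 h2
    by_cases hall : ∀ j : Fin (ar g), (j : ℕ) ≠ 0 → c j = STerm.leaf
    · refine ⟨c ⟨0, hpos g⟩, ?_⟩
      have : STerm.node g c = comb g (c ⟨0, hpos g⟩) := by
        unfold comb
        congr 1
        funext j
        split_ifs with hj
        · congr 1; exact Fin.ext hj
        · exact hall j hj
      rw [this]; exact MasRel.refl _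
    · push Not at hall
      obtain ⟨i, hi0, hi⟩ := hall
      obtain ⟨h, d, hd⟩ : ∃ h d, c i = STerm.node h d := by
        cases hc : c i with
        | leaf => exact absurd hc hi
        | node h d => exact ⟨h, d, rfl⟩
      let c' : ℕ → STerm S ar := fun p => if hp : p < ar g then c ⟨p, hp⟩ else STerm.leaf
      let d' : ℕ → STerm S ar := fun p => if hp : p < ar h then d ⟨p, hp⟩ else STerm.leaf
      let f : ℕ → STerm S ar := fun p => if p < i then c' p else if p < i + ar h then d' (p - i)
        else c' (p + 1 - ar h)
      have hm := hpos h
      have e : STerm.node g c = twoLev g h i f := by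
        unfold twoLev
        congr 1
        funext j
        have hj := j.2
        rcases lt_trichotomy (j : ℕ) i with h1 | h1 | h1
        · simp [f, h1, c']
        · have : j = i := Fin.ext h1
          subst this
          rw [hd]
          simp [f, d']
        · have a1 : ¬ (j : ℕ) < i := by omega
          have a2 : (j : ℕ) ≠ i := by omega
          have a3 : ¬ ((j : ℕ) + ar h - 1 < i) := by omega
          have a4 : ¬ ((j : ℕ) + ar h - 1 < i + ar h) := by omega
          have a5 : (j : ℕ) + ar h - 1 + 1 - ar h = j := by omega
          simp only [f, a1, a2, a3, a4, a5, if_false, c', hj, dif_pos]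
      have r : MasRel (STerm.node g c) (twoLev g h 0 f) := by
        rw [e]
        exact (rot hpos g h i 0 i.2 hm f).trans (rot hpos h g 0 0 hm (hpos g) f)
      have hs := masRel_sound r
      have hf0 : f 0 = c ⟨0, hpos g⟩ := by
        simp [f, Nat.pos_of_ne_zero hi0, c', hpos g]
      have hlt := card_child_lt h (fun k => f (0 + k)) ⟨0, hm⟩
      simp only [add_zero, hf0] at hlt
      unfold twoLev at r hs
      obtain ⟨s, hsr⟩ := ih g _ (by rw [← hs]; exact h1) (by
        simp only [lt_irrefl, if_false, if_true]
        omega)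
      exact ⟨s, r.trans hsr⟩

theorem exists_nf (hpos : ∀ g : S, 0 < ar g) (N : ℕ) : ∀ t : STerm S ar,
    Multiset.card (mdecs t) = N → ∃ w, MasRel t (nf w) := by
  induction N using Nat.strong_induction_on with
  | _ N ih =>
    intro t ht
    cases t with
    | leaf => exact ⟨[], MasRel.refl _⟩
    | node g c =>
      obtain ⟨s, hs⟩ := exists_comb hpos N N g c ht (by omega)
      have h1 := masRel_sound hs
      rw [mdecs_comb hpos] at h1
      rw [h1, Multiset.card_cons] at ht
      obtain ⟨w, hw⟩ := ih _ (by omega) s rfl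
      exact ⟨g :: w, hs.trans (comb_congr g hw)⟩

theorem masRel_complete (hpos : ∀ g : S, 0 < ar g) (t t' : STerm S ar)
    (h : mdecs t = mdecs t') : MasRel t t' := by
  obtain ⟨w, hw⟩ := exists_nf hpos _ t rfl
  obtain ⟨w', hw'⟩ := exists_nf hpos _ t' rfl
  have e := (masRel_sound hw).symm.trans (h.trans (masRel_sound hw'))
  rw [mdecs_nf hpos, mdecs_nf hpos] at e
  exact hw.trans ((nf_perm hpos (Multiset.coe_eq_coe.mp e)).trans hw'.symm)

end Aux

/-- two `S`-terms are equivalent for the multi-multiassociative congruence iff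
they have the same multiset of decorations; the elements of arity `n` of `MAs_S` correspond to
the multisets `{g₁,…,g_ℓ}` with `ar g₁ + ⋯ + ar g_ℓ - ℓ + 1 = n`, and the operadic
composition corresponds to multiset union. -/
theorem masRel_iff_decs_multiset {S : Type} {ar : S → ℕ} (hpos : ∀ g : S, 0 < ar g) :
    (∀ t t' : STerm S ar, MasRel t t' ↔ (t.decs : Multiset S) = (t'.decs : Multiset S)) ∧
    (∀ (M : Multiset S) (n : ℕ),
      (∃ t : STerm S ar, t.arity = n ∧ (t.decs : Multiset S) = M) ↔
        (M.map ar).sum + 1 = Multiset.card M + n) ∧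
    (∀ (t s : STerm S ar) (i : ℕ), i < t.arity →
      ((graftAt t i s).decs : Multiset S) = (t.decs : Multiset S) + (s.decs : Multiset S)) := by
  refine ⟨fun t t' => ⟨fun h => masRel_sound h, fun h => masRel_complete hpos t t' h⟩, ?_,
    fun t s i hi => mdecs_graftAt t s i hi⟩
  intro M n
  constructor
  · rintro ⟨t, rfl, rfl⟩
    exact arity_eq t
  · intro h
    have hM : mdecs (nf M.toList : STerm S ar) = M := by rw [mdecs_nf hpos, Multiset.coe_toList]
    refine ⟨nf M.toList, ?_, hM⟩
    have := arity_eq (nf M.toList : STerm S ar)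
    rw [hM] at this
    omega
end

section
/- Let S be a signature and 𝕂 a field of characteristic zero. The coproduct Δ on N(S) is coassociative: for every reduced S-forest f, (Δ ⊗ id) ∘ Δ (E_f) = (id ⊗ Δ) ∘ Δ (E_f) in N(S) ⊗ N(S) ⊗ N(S). -/
open scoped BigOperators

namespace NCoassoc

variable {S : Type} {ar : S → ℕ}

/-- Total arity of a forest. -/
def arF (l : List (STerm S ar)) : ℕ := (l.map STerm.arity).sum

/-- Grafting on forests. -/
def graftF : List (STerm S ar) → List (STerm S ar) → List (STerm S ar)
  | [], _ => []
  | s :: ss, l => s.graftList (l.take s.arity) :: graftF ss (l.drop s.arity)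

@[simp] theorem arF_nil : arF ([] : List (STerm S ar)) = 0 := rfl

@[simp] theorem arF_cons (s : STerm S ar) (l) : arF (s :: l) = s.arity + arF l := by
  simp [arF]

theorem arF_append (a b : List (STerm S ar)) : arF (a ++ b) = arF a + arF b := by
  simp [arF]

@[simp] theorem length_graftF (a l : List (STerm S ar)) : (graftF a l).length = a.length := by
  induction a generalizing l with
  | nil => rfl
  | cons s ss ih => simp [graftF, ih]

theorem take_graftF (v w : List (STerm S ar)) (n : ℕ) :
    (graftF v w).take n = graftF (v.take n) (w.take (arF (v.take n))) := by
  induction v generalizing w n with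
  | nil => simp [graftF]
  | cons s ss ih =>
    cases n with
    | zero => simp [graftF]
    | succ n =>
      simp only [graftF, List.take_succ_cons, arF_cons, ih, List.take_take, List.drop_take]
      congr 3
      · simp
      · simp

theorem drop_graftF (v w : List (STerm S ar)) (n : ℕ) :
    (graftF v w).drop n = graftF (v.drop n) (w.drop (arF (v.take n))) := by
  induction v generalizing w n with
  | nil => simp [graftF]
  | cons s ss ih =>
    cases n with
    | zero => simp [graftF]
    | succ n =>
      simp only [graftF, List.drop_succ_cons, List.take_succ_cons, arF_cons, ih, List.drop_drop]

theorem getElem_graftF (a l : List (STerm S ar)) (i : ℕ) (hi : i < (graftF a l).length)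
    (hi' : i < a.length) :
    (graftF a l)[i] = (a[i]).graftList ((l.drop (arF (a.take i))).take (a[i]).arity) := by
  induction a generalizing l i with
  | nil => simp at hi'
  | cons s ss ih =>
    cases i with
    | zero => simp [graftF]
    | succ i =>
      simp only [graftF, List.getElem_cons_succ, List.take_succ_cons, arF_cons]
      rw [ih _ _ (by simpa using hi') (by simpa using hi'), List.drop_drop]

theorem off_eq (n : ℕ) (c : Fin n → STerm S ar) (i : ℕ) :
    (∑ j : Fin n, if (j : ℕ) < i then (c j).arity else 0) = arF ((List.ofFn c).take i) := by
  induction n generalizing i with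
  | zero => simp
  | succ n ih =>
    rw [Fin.sum_univ_succ, List.ofFn_succ]
    cases i with
    | zero => simp
    | succ i => simp [ih]

theorem arF_ofFn (n : ℕ) (c : Fin n → STerm S ar) : arF (List.ofFn c) = ∑ i, (c i).arity := by
  simp [arF, List.map_ofFn, List.sum_ofFn]

theorem graft_node (g : S) (c : Fin (ar g) → STerm S ar) (l : List (STerm S ar)) :
    ∃ c', (STerm.node g c).graftList l = STerm.node g c' ∧
      List.ofFn c' = graftF (List.ofFn c) l := by
  refine ⟨_, by rw [STerm.graftList], ?_⟩
  apply List.ext_getElem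
  · simp
  · intro i h1 h2
    rw [getElem_graftF _ _ _ _ (by simpa using h1)]
    simp only [List.getElem_ofFn, off_eq]

theorem arF_graftF_aux (a : List (STerm S ar))
    (H : ∀ s ∈ a, ∀ l : List (STerm S ar), l.length = s.arity → (s.graftList l).arity = arF l)
    (l : List (STerm S ar)) (hl : l.length = arF a) : arF (graftF a l) = arF l := by
  induction a generalizing l with
  | nil =>
    have : l = [] := by simpa using hl
    simp [graftF, this]
  | cons s ss ih =>
    rw [arF_cons] at hl
    rw [graftF, arF_cons, H s (by simp) _ (by simp; omega),
      ih (fun s hs => H s (by simp [hs])) _ (by simp; omega), ← arF_append, List.take_append_drop]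

theorem arity_graft (s : STerm S ar) (l : List (STerm S ar)) (hl : l.length = s.arity) :
    (s.graftList l).arity = arF l := by
  induction s generalizing l with
  | leaf =>
    simp only [STerm.arity] at hl
    obtain ⟨x, rfl⟩ := List.length_eq_one_iff.1 hl
    simp [STerm.graftList]
  | node g c ih =>
    obtain ⟨c', h1, h2⟩ := graft_node g c l
    rw [h1, STerm.arity, ← arF_ofFn, h2]
    apply arF_graftF_aux
    · intro s hs
      obtain ⟨i, rfl⟩ := (List.mem_ofFn' _ _).1 hs
      exact ih i
    · rw [hl, STerm.arity, arF_ofFn]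

theorem arF_graftF (a l : List (STerm S ar)) (hl : l.length = arF a) :
    arF (graftF a l) = arF l :=
  arF_graftF_aux a (fun s _ l hl => arity_graft s l hl) l hl

theorem graftF_assoc_aux (a : List (STerm S ar))
    (H : ∀ s ∈ a, ∀ v w : List (STerm S ar), v.length = s.arity → w.length = arF v →
      (s.graftList v).graftList w = s.graftList (graftF v w))
    (v w : List (STerm S ar)) (hv : v.length = arF a) (hw : w.length = arF v) :
    graftF (graftF a v) w = graftF a (graftF v w) := by
  induction a generalizing v w with
  | nil => rfl
  | cons s ss ih =>
    rw [arF_cons] at hv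
    have e : arF v = arF (v.take s.arity) + arF (v.drop s.arity) := by
      rw [← arF_append, List.take_append_drop]
    have e1 : (s.graftList (v.take s.arity)).arity = arF (v.take s.arity) :=
      arity_graft _ _ (by simp; omega)
    rw [graftF, graftF, graftF, e1, take_graftF, drop_graftF,
      H s (by simp) _ _ (by simp; omega) (by simp; omega),
      ih (fun s hs => H s (by simp [hs])) _ _ (by simp; omega) (by simp; omega)]

theorem graft_assoc (s : STerm S ar) (v w : List (STerm S ar)) (hv : v.length = s.arity)
    (hw : w.length = arF v) :
    (s.graftList v).graftList w = s.graftList (graftF v w) := by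
  induction s generalizing v w with
  | leaf =>
    simp only [STerm.arity] at hv
    obtain ⟨x, rfl⟩ := List.length_eq_one_iff.1 hv
    have : w.take x.arity = w := List.take_of_length_le (by simp at hw; omega)
    simp [STerm.graftList, graftF, this]
  | node g c ih =>
    obtain ⟨c', h1, h2⟩ := graft_node g c v
    obtain ⟨d, h3, h4⟩ := graft_node g c' w
    obtain ⟨e, h5, h6⟩ := graft_node g c (graftF v w)
    rw [h1, h3, h5]
    congr 1
    apply List.ofFn_injective
    rw [h4, h6, h2]
    apply graftF_assoc_aux
    · intro s hs
      obtain ⟨i, rfl⟩ := (List.mem_ofFn' _ _).1 hs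
      exact ih i
    · rw [hv, STerm.arity, arF_ofFn]
    · exact hw

theorem graftF_assoc (a v w : List (STerm S ar)) (hv : v.length = arF a)
    (hw : w.length = arF v) : graftF (graftF a v) w = graftF a (graftF v w) :=
  graftF_assoc_aux a (fun s _ v w => graft_assoc s v w) v w hv hw

/-- Factorizations of a forest as pairs of forests. -/
def Fac (L : List (STerm S ar)) : Set (List (STerm S ar) × List (STerm S ar)) :=
  {p | p.2.length = arF p.1 ∧ graftF p.1 p.2 = L}

theorem fac_finite_aux (L : List (STerm S ar))
    (H : ∀ t ∈ L, {p : STerm S ar × List (STerm S ar) |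
      p.2.length = p.1.arity ∧ p.1.graftList p.2 = t}.Finite) : (Fac L).Finite := by
  induction L with
  | nil =>
    apply (Set.finite_singleton (([], []) : List (STerm S ar) × List (STerm S ar))).subset
    rintro ⟨a, b⟩ ⟨h1, h2⟩
    have h3 := congrArg List.length h2
    simp only [length_graftF] at h3
    have : a = [] := by simpa using h3
    subst this
    have : b = [] := by simpa using h1
    simp [this]
  | cons t L ih =>
    have h1 := H t (by simp)
    have h2 := ih (fun t ht => H t (by simp [ht]))
    apply ((h1.prod h2).image (fun q => (q.1.1 :: q.2.1, q.1.2 ++ q.2.2))).subset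
    rintro ⟨a, b⟩ ⟨h3, h4⟩
    cases a with
    | nil => simp [graftF] at h4
    | cons s a =>
      simp only [graftF, List.cons.injEq, arF_cons] at h3 h4
      refine ⟨((s, b.take s.arity), (a, b.drop s.arity)), ⟨⟨?_, h4.1⟩, ?_, h4.2⟩, ?_⟩
      · simp; omega
      · simp; omega
      · simp

theorem facT_finite (t : STerm S ar) : {p : STerm S ar × List (STerm S ar) |
      p.2.length = p.1.arity ∧ p.1.graftList p.2 = t}.Finite := by
  induction t with
  | leaf =>
    apply (Set.finite_singleton (STerm.leaf, [STerm.leaf])).subset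
    rintro ⟨s, u⟩ ⟨h1, h2⟩
    cases s with
    | leaf =>
      obtain ⟨x, rfl⟩ := List.length_eq_one_iff.1 h1
      simpa [STerm.graftList] using h2
    | node g c => simp [STerm.graftList] at h2
  | node g c ih =>
    have hF : (Fac (List.ofFn c)).Finite := by
      apply fac_finite_aux
      intro s hs
      obtain ⟨i, rfl⟩ := (List.mem_ofFn' _ _).1 hs
      exact ih i
    have hG : {p : STerm S ar × List (STerm S ar) | ∃ d, p.1 = STerm.node g d ∧
        (List.ofFn d, p.2) ∈ Fac (List.ofFn c)}.Finite := by
      refine (Set.Finite.preimage (f := fun q : (Fin (ar g) → STerm S ar) × List (STerm S ar) =>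
        (List.ofFn q.1, q.2)) ?_ hF |>.image (fun q => (STerm.node g q.1, q.2))).subset ?_
      · rintro ⟨a, b⟩ _ ⟨a', b'⟩ _ h
        simp only [Prod.mk.injEq] at h
        rw [List.ofFn_injective h.1, h.2]
      · rintro ⟨_, b⟩ ⟨d, rfl, h⟩
        exact ⟨(d, b), h, rfl⟩
    apply (hG.union (Set.finite_singleton (STerm.leaf, [STerm.node g c]))).subset
    rintro ⟨s, u⟩ ⟨h1, h2⟩
    cases s with
    | leaf =>
      right
      obtain ⟨x, rfl⟩ := List.length_eq_one_iff.1 h1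
      simpa [STerm.graftList] using h2
    | node g' d =>
      left
      obtain ⟨c', h3, h4⟩ := graft_node g' d u
      simp only [h3, STerm.node.injEq] at h2
      obtain ⟨rfl, h2⟩ := h2
      obtain rfl := eq_of_heq h2
      refine ⟨d, rfl, ?_, h4.symm⟩
      simpa [STerm.arity, arF_ofFn] using h1

theorem fac_finite (L : List (STerm S ar)) : (Fac L).Finite :=
  fac_finite_aux L (fun t _ => facT_finite t)

/-- Factorizations of a forest as lists of pairs. -/
def FacC (L : List (STerm S ar)) : Set (List (STerm S ar × List (STerm S ar))) :=
  {c | List.Forall₂ (fun p t => p.2.length = p.1.arity ∧ p.1.graftList p.2 = t) c L}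

theorem bijOn_fac (L : List (STerm S ar)) :
    Set.BijOn (fun c => (c.map Prod.fst, c.flatMap Prod.snd)) (FacC L) (Fac L) := by
  refine ⟨?_, ?_, ?_⟩
  · intro c hc
    simp only [FacC, Set.mem_ofPred_eq] at hc
    induction hc with
    | nil => simp [Fac, graftF]
    | cons h _ ih =>
      obtain ⟨h1, h2⟩ := h
      obtain ⟨h3, h4⟩ := ih
      simp only at h3 h4
      refine ⟨?_, ?_⟩
      · simp only [List.flatMap_cons, List.length_append, List.map_cons, arF_cons, h1, h3]
      · simp only [List.flatMap_cons, List.map_cons, graftF, ← h1, List.take_left,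
          List.drop_left, h2, h4]
  · intro c hc
    simp only [FacC, Set.mem_ofPred_eq] at hc
    induction hc with
    | nil =>
      intro c' hc' _
      simp only [FacC, Set.mem_ofPred_eq, List.forall₂_nil_right_iff] at hc'
      exact hc'.symm
    | cons h _ ih =>
      intro c' hc' e
      simp only [FacC, Set.mem_ofPred_eq, List.forall₂_cons_right_iff] at hc'
      obtain ⟨⟨s, u⟩, c'', h', hc'', rfl⟩ := hc'
      simp only [List.map_cons, List.flatMap_cons, Prod.mk.injEq, List.cons.injEq] at e
      obtain ⟨⟨e1, e2⟩, e3⟩ := e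
      obtain ⟨e4, e5⟩ := List.append_inj e3 (by rw [h.1, h'.1, e1])
      rw [ih hc'' (by simp only [e2, e5])]
      congr 1
      exact Prod.ext e1 e4
  · rintro ⟨a, b⟩ ⟨h1, h2⟩
    simp only at h1 h2
    induction a generalizing b L with
    | nil =>
      obtain rfl : b = [] := by simpa using h1
      subst h2
      exact ⟨[], by simp [FacC, graftF], rfl⟩
    | cons s a ih =>
      subst h2
      rw [arF_cons] at h1
      obtain ⟨c, hc, e⟩ := ih _ (b.drop s.arity) (by simp; omega) rfl
      simp only [Prod.mk.injEq] at e
      refine ⟨(s, b.take s.arity) :: c, ?_, ?_⟩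
      · refine List.Forall₂.cons ⟨?_, rfl⟩ hc
        simp; omega
      · simp [e.1, e.2]

theorem rdF_cons_leaf (l : List (STerm S ar)) : rdF (STerm.leaf :: l) = rdF l := by
  simp [rdF]

theorem rdF_append (l l' : List (STerm S ar)) : rdF (l ++ l') = rdF l ++ rdF l' := by
  induction l with
  | nil => simp [rdF]
  | cons t l ih => cases t <;> simp [rdF, ih]

theorem rdF_map_val (l : List (RTerm S ar)) : rdF (l.map Subtype.val) = l := by
  induction l with
  | nil => simp [rdF]
  | cons t l ih =>
    obtain ⟨t, ht⟩ := t
    cases t with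
    | leaf => exact absurd rfl ht
    | node g c => simp only [List.map_cons, rdF, ih]

theorem facT_leaf (p : STerm S ar × List (STerm S ar)) :
    (p.2.length = p.1.arity ∧ p.1.graftList p.2 = STerm.leaf) ↔
      p = (STerm.leaf, [STerm.leaf]) := by
  constructor
  · obtain ⟨s, u⟩ := p
    rintro ⟨h1, h2⟩
    cases s with
    | leaf =>
      obtain ⟨x, rfl⟩ := List.length_eq_one_iff.1 h1
      simpa [STerm.graftList] using h2
    | node g c => simp [STerm.graftList] at h2
  · rintro rfl
    simp [STerm.arity, STerm.graftList]

open Classical in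
/-- Removal of trivial factors. -/
noncomputable def clean (c : List (STerm S ar × List (STerm S ar))) :
    List (STerm S ar × List (STerm S ar)) :=
  c.filter (fun p => p ≠ (STerm.leaf, [STerm.leaf]))

theorem clean_cons_leaf (c : List (STerm S ar × List (STerm S ar))) :
    clean ((STerm.leaf, [STerm.leaf]) :: c) = clean c := by
  simp [clean]

theorem clean_cons_of_ne (p) (c : List (STerm S ar × List (STerm S ar)))
    (h : p ≠ (STerm.leaf, [STerm.leaf])) : clean (p :: c) = p :: clean c := by
  simp [clean, h]

theorem clean_rd (c : List (STerm S ar × List (STerm S ar))) :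
    rdF ((clean c).map Prod.fst) = rdF (c.map Prod.fst) ∧
    rdF ((clean c).flatMap Prod.snd) = rdF (c.flatMap Prod.snd) := by
  induction c with
  | nil => simp [clean]
  | cons p c ih =>
    by_cases h : p = (STerm.leaf, [STerm.leaf])
    · subst h
      rw [clean_cons_leaf]
      simp [rdF_cons_leaf, ih.1, ih.2]
    · rw [clean_cons_of_ne _ _ h]
      obtain ⟨s, u⟩ := p
      constructor
      · cases s <;> simp [rdF, ih.1]
      · simp [rdF_append, ih.2]

theorem bijOn_clean (L : List (STerm S ar)) :
    Set.BijOn clean (FacC L) (FacC ((rdF L).map Subtype.val)) := by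
  induction L with
  | nil =>
    have : FacC ([] : List (STerm S ar)) = {[]} := by
      ext c; simp [FacC]
    simp [rdF, this, clean]
  | cons t L ih =>
    cases t with
    | leaf =>
      rw [rdF_cons_leaf]
      have : FacC (STerm.leaf :: L) = (fun c => (STerm.leaf, [STerm.leaf]) :: c) '' FacC L := by
        ext c
        simp only [FacC, Set.mem_ofPred_eq, List.forall₂_cons_right_iff, facT_leaf, Set.mem_image]
        constructor
        · rintro ⟨_, c', rfl, h, rfl⟩; exact ⟨c', h, rfl⟩
        · rintro ⟨c', h, rfl⟩; exact ⟨_, c', rfl, h, rfl⟩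
      rw [this]
      refine ⟨?_, ?_, ?_⟩
      · rintro _ ⟨c, hc, rfl⟩
        simp only [clean_cons_leaf]
        exact ih.1 hc
      · rintro _ ⟨c, hc, rfl⟩ _ ⟨c', hc', rfl⟩ e
        simp only [clean_cons_leaf] at e
        rw [ih.2.1 hc hc' e]
      · intro d hd
        obtain ⟨c, hc, rfl⟩ := ih.2.2 hd
        exact ⟨_, ⟨c, hc, rfl⟩, clean_cons_leaf c⟩
    | node g x =>
      have key : ∀ p : STerm S ar × List (STerm S ar),
          (p.2.length = p.1.arity ∧ p.1.graftList p.2 = STerm.node g x) →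
          p ≠ (STerm.leaf, [STerm.leaf]) := by
        rintro p ⟨_, h⟩ rfl
        simp [STerm.graftList] at h
      have e0 : (rdF (STerm.node g x :: L)).map Subtype.val
          = STerm.node g x :: (rdF L).map Subtype.val := by simp [rdF]
      rw [e0]
      refine ⟨?_, ?_, ?_⟩
      · intro c hc
        simp only [FacC, Set.mem_ofPred_eq, List.forall₂_cons_right_iff] at hc
        obtain ⟨p, c, hp, hc, rfl⟩ := hc
        rw [clean_cons_of_ne _ _ (key p hp)]
        exact List.Forall₂.cons hp (ih.1 hc)
      · intro c hc c' hc' e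
        simp only [FacC, Set.mem_ofPred_eq, List.forall₂_cons_right_iff] at hc hc'
        obtain ⟨p, c, hp, hc, rfl⟩ := hc
        obtain ⟨p', c', hp', hc', rfl⟩ := hc'
        rw [clean_cons_of_ne _ _ (key p hp), clean_cons_of_ne _ _ (key p' hp')] at e
        simp only [List.cons.injEq] at e
        rw [e.1, ih.2.1 hc hc' e.2]
      · intro d hd
        simp only [FacC, Set.mem_ofPred_eq, List.forall₂_cons_right_iff] at hd
        obtain ⟨p, d, hp, hd, rfl⟩ := hd
        obtain ⟨c, hc, rfl⟩ := ih.2.2 hd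
        exact ⟨p :: c, List.Forall₂.cons hp hc, clean_cons_of_ne _ _ (key p hp)⟩

open scoped TensorProduct

theorem DeltaN_E (𝕂 : Type) [Field 𝕂] (f : List (RTerm S ar)) :
    DeltaN 𝕂 S ar (EBasis 𝕂 f) = ∑ᶠ c ∈ FacC (f.map Subtype.val),
      (EBasis 𝕂 (rdF (c.map Prod.fst))) ⊗ₜ[𝕂] (EBasis 𝕂 (rdF (c.flatMap Prod.snd))) := by
  simp only [FacC, List.forall₂_map_right_iff]
  simp [DeltaN, EBasis]

theorem DeltaN_rd (𝕂 : Type) [Field 𝕂] (L : List (STerm S ar)) :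
    DeltaN 𝕂 S ar (EBasis 𝕂 (rdF L)) = ∑ p ∈ (fac_finite L).toFinset,
      (EBasis 𝕂 (rdF p.1)) ⊗ₜ[𝕂] (EBasis 𝕂 (rdF p.2)) := by
  rw [DeltaN_E, ← finsum_mem_eq_finite_toFinset_sum,
    ← finsum_mem_eq_of_bijOn _ (bijOn_fac L) (fun c _ => rfl)]
  symm
  apply finsum_mem_eq_of_bijOn _ (bijOn_clean L)
  intro c _
  rw [(clean_rd c).1, (clean_rd c).2]

end NCoassoc

open scoped TensorProduct in
/-- the coproduct `Δ` of `N(S)` is coassociative on the basis elements `E_f`. -/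
theorem DeltaN_coassoc {S : Type} {ar : S → ℕ} (𝕂 : Type) [Field 𝕂] [CharZero 𝕂]
    (f : List (RTerm S ar)) :
    (TensorProduct.assoc 𝕂 (NAlg 𝕂 S ar) (NAlg 𝕂 S ar) (NAlg 𝕂 S ar))
        ((TensorProduct.map (DeltaN 𝕂 S ar) LinearMap.id) (DeltaN 𝕂 S ar (EBasis 𝕂 f)))
      = (TensorProduct.map LinearMap.id (DeltaN 𝕂 S ar)) (DeltaN 𝕂 S ar (EBasis 𝕂 f)) := by
  rw [← NCoassoc.rdF_map_val f]
  generalize f.map Subtype.val = L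
  rw [NCoassoc.DeltaN_rd]
  simp only [map_sum, TensorProduct.map_tmul, LinearMap.id_coe, id_eq, NCoassoc.DeltaN_rd,
    TensorProduct.sum_tmul, TensorProduct.tmul_sum, TensorProduct.assoc_tmul]
  rw [Finset.sum_sigma', Finset.sum_sigma']
  refine Finset.sum_bij'
    (fun x _ => ⟨(x.2.1, NCoassoc.graftF x.2.2 x.1.2), (x.2.2, x.1.2)⟩)
    (fun y _ => ⟨(NCoassoc.graftF y.1.1 y.2.1, y.2.2), (y.1.1, y.2.1)⟩) ?_ ?_ ?_ ?_ ?_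
  · rintro ⟨⟨a, b⟩, ⟨x, y⟩⟩ h
    simp only [Finset.mem_sigma, Set.Finite.mem_toFinset, NCoassoc.Fac, Set.mem_ofPred_eq] at h ⊢
    obtain ⟨⟨h1, h2⟩, h3, h4⟩ := h
    subst h4
    rw [NCoassoc.arF_graftF _ _ h3] at h1
    rw [NCoassoc.graftF_assoc _ _ _ h3 h1] at h2
    exact ⟨⟨by simpa using h3, h2⟩, h1, trivial⟩
  · rintro ⟨⟨a, b⟩, ⟨x, y⟩⟩ h
    simp only [Finset.mem_sigma, Set.Finite.mem_toFinset, NCoassoc.Fac, Set.mem_ofPred_eq] at h ⊢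
    obtain ⟨⟨h1, h2⟩, h3, h4⟩ := h
    subst h4
    rw [NCoassoc.length_graftF] at h1
    rw [NCoassoc.arF_graftF _ _ h1, NCoassoc.graftF_assoc _ _ _ h1 h3]
    exact ⟨⟨h3, h2⟩, h1, trivial⟩
  · rintro ⟨⟨a, b⟩, ⟨x, y⟩⟩ h
    simp only [Finset.mem_sigma, Set.Finite.mem_toFinset, NCoassoc.Fac, Set.mem_ofPred_eq] at h ⊢
    obtain ⟨_, _, rfl⟩ := h
    rfl
  · rintro ⟨⟨a, b⟩, ⟨x, y⟩⟩ h
    simp only [Finset.mem_sigma, Set.Finite.mem_toFinset, NCoassoc.Fac, Set.mem_ofPred_eq] at h ⊢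
    obtain ⟨_, _, rfl⟩ := h
    rfl
  · intro x _
    rfl
end
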